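/- arXiv:2207.01729 — 11 statements merged into one kernel-verified Lean document; each statement's English description precedes it below -/
import Mathlib

section
/- Let n ≥ 1 and N ≥ 1 be integers and let p be a homogeneous real polynomial of degree N in n variables such that: (1) every coefficient of p is ≥ 0; (2) p(1,…,1) = 1; (3) (Central Ray Hypothesis) all first-order partial derivatives ∂p/∂x_j at the point e = (1,…,1) are equal to one common value k > 0. Then for all real numbers x₁ > 0, …, xₙ > 0 one has p(x₁,…,xₙ)^{1/N} ≥ (x₁⋯xₙ)^{1/n}. -/
/-!
The number `p(x) = ∑ c_d x^d` is a weighted arithmetic mean of the monomials `x^d`, the weights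
being the coefficients `c_d ≥ 0`, whose sum is `p(e) = 1`. The corresponding weighted geometric
mean is `∏ i, x_i ^ (∑ c_d d_i)`, and `∑ c_d d_i = ∂p/∂x_i (e) = k` for every `i`, so weighted AM-GM
gives `(∏ x_i) ^ k ≤ p(x)`. Euler's identity at `e` gives `n k = N`, and taking `N`-th roots
concludes.
-/

open MvPolynomial

/-- The partial derivative at `e` is the sum of the exponents of `X j` weighted by the
coefficients. -/
lemma eval_one_pderiv {n : ℕ} (p : MvPolynomial (Fin n) ℝ) (j : Fin n) :
    eval (fun _ : Fin n => (1 : ℝ)) (pderiv j p) = ∑ d ∈ p.support, p.coeff d * (d j : ℝ) := by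
  conv_lhs => rw [← p.support_sum_monomial_coeff]
  simp only [map_sum, pderiv_monomial, eval_monomial]
  simp

/-- Basic Lemma 2.1 (majorization of the determinant): if `p` is homogeneous of
degree `N` in `n` variables, with all coefficients `≥ 0`, normalized `p(1,…,1)=1`,
and satisfies the Central Ray Hypothesis, then
`p(x)^{1/N} ≥ (x₁⋯xₙ)^{1/n}` for all positive `x`. -/
theorem basic_lemma_determinant_majorization
    (n N : ℕ) (hn : 1 ≤ n) (hN : 1 ≤ N)
    (p : MvPolynomial (Fin n) ℝ)
    (hhom : p.IsHomogeneous N)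
    (hcoeff : ∀ d, 0 ≤ p.coeff d)
    (hnorm : eval (fun _ : Fin n => (1 : ℝ)) p = 1)
    (k : ℝ) (hk : 0 < k)
    (hCRH : ∀ j : Fin n, eval (fun _ : Fin n => (1 : ℝ)) (pderiv j p) = k)
    (x : Fin n → ℝ) (hx : ∀ i, 0 < x i) :
    (∏ i, x i) ^ ((1 : ℝ) / n) ≤ (eval x p) ^ ((1 : ℝ) / N) := by
  have hkN : (n : ℝ) * k = N := by
    have h := congrArg (eval (fun _ : Fin n => (1 : ℝ))) hhom.sum_X_mul_pderiv
    simpa [hCRH, hnorm] using h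
  have hn0 : (0 : ℝ) < n := by exact_mod_cast hn
  have hN0 : (0 : ℝ) < N := by exact_mod_cast hN
  have hprod : 0 < ∏ i, x i := Finset.prod_pos fun i _ => hx i
  have hsum : ∑ d ∈ p.support, p.coeff d = 1 := by
    simpa [eval_eq] using hnorm
  have hz : ∀ d : Fin n →₀ ℕ, 0 ≤ ∏ i, x i ^ d i := fun d =>
    Finset.prod_nonneg fun i _ => pow_nonneg (hx i).le _
  have hamgm := Real.geom_mean_le_arith_mean_weighted p.support (fun d => p.coeff d)
    (fun d => ∏ i, x i ^ d i) (fun d _ => hcoeff d) hsum (fun d _ => hz d)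
  have hgeom : ∏ d ∈ p.support, (∏ i, x i ^ d i) ^ p.coeff d = (∏ i, x i) ^ k := by
    calc ∏ d ∈ p.support, (∏ i, x i ^ d i) ^ p.coeff d
        = ∏ d ∈ p.support, ∏ i, x i ^ (p.coeff d * (d i : ℝ)) := by
          refine Finset.prod_congr rfl fun d _ => ?_
          rw [← Real.finsetProd_rpow _ _ fun i _ => pow_nonneg (hx i).le _]
          refine Finset.prod_congr rfl fun i _ => ?_
          rw [← Real.rpow_natCast, ← Real.rpow_mul (hx i).le, mul_comm]
      _ = ∏ i, x i ^ k := by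
          rw [Finset.prod_comm]
          refine Finset.prod_congr rfl fun i _ => ?_
          rw [← Real.rpow_sum_of_pos (hx i), ← eval_one_pderiv, hCRH]
      _ = (∏ i, x i) ^ k := Real.finsetProd_rpow _ _ (fun i _ => (hx i).le) k
  have hmain : (∏ i, x i) ^ k ≤ eval x p := by
    rw [eval_eq', ← hgeom]
    exact hamgm
  have hexp : (1 : ℝ) / n = k * (1 / N) := by
    rw [← hkN]
    field_simp
  rw [hexp, Real.rpow_mul hprod.le]
  exact Real.rpow_le_rpow (Real.rpow_nonneg hprod.le _) hmain (by positivity)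
end

section
/- Let n ≥ 1 and N ≥ 1 be integers and let p ≠ 0 be a homogeneous real polynomial of degree N in n variables which is symmetric (invariant under every permutation of its variables), has all coefficients ≥ 0, and is normalized so that p(1,…,1) = 1. Then for all real numbers x₁ > 0, …, xₙ > 0 one has p(x₁,…,xₙ)^{1/N} ≥ (x₁⋯xₙ)^{1/n}. -/
open MvPolynomial

/-!
Write `p = ∑ c_d x^d`. The coefficients `c_d` are nonnegative and sum to `p(1,…,1) = 1`, so concavity
of the logarithm (weighted AM-GM) gives
`log p(x) ≥ ∑_d c_d log (x^d) = ∑_i m_i log x_i`, where `m_i = ∑_d c_d d_i` is the mean exponent of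
`x_i`. Symmetry of `p` makes all `m_i` equal (`meanExp_eq`), and homogeneity gives `∑_i m_i = N`, so
`m_i = N / n` (`meanExp_value`); the claim is the exponential of the resulting inequality.
-/

/-- The mean exponent `∑_d c_d d_i` of the variable `x_i` in `p = ∑ c_d x^d`, i.e. the value of
`∂p/∂x_i` at `(1,…,1)`. -/
noncomputable def meanExp {n : ℕ} (p : MvPolynomial (Fin n) ℝ) (i : Fin n) : ℝ :=
  ∑ d ∈ p.support, p.coeff d * d i

/-- Swapping `x_i` and `x_j` permutes the monomials of a symmetric polynomial and preserves their
coefficients. -/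
lemma meanExp_eq {n : ℕ} {p : MvPolynomial (Fin n) ℝ} (hsym : p.IsSymmetric) (i j : Fin n) :
    meanExp p i = meanExp p j := by
  have hc : ∀ d, p.coeff (d.mapDomain (Equiv.swap i j)) = p.coeff d := fun d => by
    conv_lhs => rw [← hsym (Equiv.swap i j)]
    exact coeff_rename_mapDomain _ (Equiv.injective _) p d
  have hinv : ∀ d : Fin n →₀ ℕ,
      (d.mapDomain (Equiv.swap i j)).mapDomain (Equiv.swap i j) = d := fun d => by
    rw [← Finsupp.mapDomain_comp]
    convert Finsupp.mapDomain_id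
    ext k
    simp
  have hmem : ∀ d ∈ p.support, d.mapDomain (Equiv.swap i j) ∈ p.support := fun d hd => by
    rw [mem_support_iff] at hd ⊢
    rwa [hc]
  refine Finset.sum_nbij' (fun d => d.mapDomain (Equiv.swap i j))
    (fun d => d.mapDomain (Equiv.swap i j)) hmem hmem (fun d _ => hinv d) (fun d _ => hinv d) ?_
  intro d _
  have h := Finsupp.mapDomain_apply (Equiv.swap i j).injective d i
  rw [Equiv.swap_apply_left] at h
  simp only [hc, h]

lemma meanExp_value {n N : ℕ} {p : MvPolynomial (Fin n) ℝ} (hhom : p.IsHomogeneous N)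
    (hsym : p.IsSymmetric) (hsum : ∑ d ∈ p.support, p.coeff d = 1) (i : Fin n) :
    n * meanExp p i = N := by
  have h1 : ∑ j, meanExp p j = n * meanExp p i := by
    rw [Finset.sum_congr rfl fun j _ => meanExp_eq hsym j i]
    simp
  rw [← h1]
  simp only [meanExp]
  rw [Finset.sum_comm, ← one_mul (N : ℝ), ← hsum, Finset.sum_mul]
  refine Finset.sum_congr rfl fun d hd => ?_
  have hdeg : ∑ j, d j = N := by
    rw [← Finsupp.degree_eq_sum, Finsupp.degree_eq_weight_one]
    exact hhom (mem_support_iff.1 hd)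
  rw [← Finset.mul_sum, ← hdeg]
  push_cast
  rfl

/-- Corollary 2.2: if `p ≠ 0` is a symmetric homogeneous polynomial of degree `N`
in `n` variables, all of whose coefficients are `≥ 0`, normalized so `p(1,…,1)=1`,
then `p(x)^{1/N} ≥ (x₁⋯xₙ)^{1/n}` for all positive `x`. -/
theorem symmetric_determinant_majorization
    (n N : ℕ) (hn : 1 ≤ n) (hN : 1 ≤ N)
    (p : MvPolynomial (Fin n) ℝ) (hp : p ≠ 0)
    (hhom : p.IsHomogeneous N)
    (hsym : p.IsSymmetric)
    (hcoeff : ∀ d, 0 ≤ p.coeff d)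
    (hnorm : eval (fun _ : Fin n => (1 : ℝ)) p = 1)
    (x : Fin n → ℝ) (hx : ∀ i, 0 < x i) :
    (∏ i, x i) ^ ((1 : ℝ) / n) ≤ (eval x p) ^ ((1 : ℝ) / N) := by
  have hsum : ∑ d ∈ p.support, p.coeff d = 1 := by
    simpa [eval_eq'] using hnorm
  have hmon : ∀ d : Fin n →₀ ℕ, 0 < ∏ i, x i ^ d i := fun d =>
    Finset.prod_pos fun i _ => pow_pos (hx i) _
  have hpos : 0 < eval x p := by
    rw [eval_eq']
    refine Finset.sum_pos (fun d hd => mul_pos ?_ (hmon d)) (support_nonempty.2 hp)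
    exact lt_of_le_of_ne (hcoeff d) (mem_support_iff.1 hd).symm
  have hprod : 0 < ∏ i, x i := Finset.prod_pos fun i _ => hx i
  have hn0 : (0 : ℝ) < n := by exact_mod_cast hn
  have hN0 : (0 : ℝ) < N := by exact_mod_cast hN
  have hjensen : ∑ d ∈ p.support, p.coeff d * Real.log (∏ i, x i ^ d i) ≤
      Real.log (eval x p) := by
    rw [eval_eq']
    exact strictConcaveOn_log_Ioi.concaveOn.le_map_sum (fun d _ => hcoeff d) hsum
      (fun d _ => hmon d)
  have hmean : ∑ d ∈ p.support, p.coeff d * Real.log (∏ i, x i ^ d i) =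
      N / n * Real.log (∏ i, x i) := by
    have hlog : ∀ d : Fin n →₀ ℕ,
        Real.log (∏ i, x i ^ d i) = ∑ i, d i * Real.log (x i) := fun d => by
      rw [Real.log_prod fun i _ => (pow_pos (hx i) _).ne']
      simp
    simp only [hlog, Finset.mul_sum]
    rw [Finset.sum_comm, Real.log_prod fun i _ => (hx i).ne', Finset.mul_sum]
    refine Finset.sum_congr rfl fun i _ => ?_
    rw [← meanExp_value hhom hsym hsum i, mul_div_cancel_left₀ _ hn0.ne', meanExp, Finset.sum_mul]
    exact Finset.sum_congr rfl fun d _ => by ring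
  rw [hmean] at hjensen
  rw [← Real.log_le_log_iff (Real.rpow_pos_of_pos hprod _) (Real.rpow_pos_of_pos hpos _),
    Real.log_rpow hprod, Real.log_rpow hpos]
  calc 1 / (n : ℝ) * Real.log (∏ i, x i)
      = 1 / (N : ℝ) * (N / n * Real.log (∏ i, x i)) := by field_simp
    _ ≤ 1 / (N : ℝ) * Real.log (eval x p) := by gcongr
end

section
/- Let n ≥ 1 and N ≥ 1 be integers and let p ≠ 0 be a homogeneous real polynomial of degree N in n variables which is symmetric (invariant under every permutation of its variables) and has all coefficients ≥ 0. Then p(1,…,1) > 0, and for every real symmetric positive semidefinite n×n matrix A with eigenvalues λ₁(A),…,λₙ(A) (listed with multiplicity), one has p(λ₁(A),…,λₙ(A))^{1/N} ≥ p(1,…,1)^{1/N} · (det A)^{1/n}. -/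
/-!
Let `x` be the vector of eigenvalues, which are nonnegative. Since `p` has nonnegative
coefficients `c_d`, the value `p(x) / p(1)` is a convex combination of the monomials `x ^ d` with
weights `c_d / p(1)`. Weighted AM-GM bounds it below by `∏ d, (x ^ d) ^ (c_d / p(1)) = ∏ i, x_i ^ s_i`
with `s_i = (∑ d, c_d * d_i) / p(1)`. By symmetry of `p` the exponents `s_i` are all equal
(`sum_coeff_mul_eq_of_isSymmetric`), and by homogeneity they add up to `N`; hence each is `N / n`
(`card_mul_sum_coeff_mul`). Thus `p(x) / p(1) ≥ (∏ i, x_i) ^ (N / n) = (det A) ^ (N / n)`, and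
taking `N`-th roots gives the claim.
-/

open MvPolynomial

theorem eval_one_eq_sum_coeff {n : ℕ} (p : MvPolynomial (Fin n) ℝ) :
    eval (fun _ : Fin n => (1 : ℝ)) p = ∑ d ∈ p.support, p.coeff d := by
  simp [eval_eq']

theorem eval_one_pos {n : ℕ} {p : MvPolynomial (Fin n) ℝ} (hp : p ≠ 0)
    (hcoeff : ∀ d, 0 ≤ p.coeff d) : 0 < eval (fun _ : Fin n => (1 : ℝ)) p := by
  rw [eval_one_eq_sum_coeff]
  refine Finset.sum_pos (fun d hd => ?_) (support_nonempty.2 hp)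
  exact lt_of_le_of_ne (hcoeff d) (Ne.symm (mem_support_iff.1 hd))

/-- The coefficient-weighted sum of the exponents of a variable in a symmetric polynomial does not
depend on the variable: swapping the variables `i` and `j` permutes the monomials and preserves the
coefficients. -/
theorem sum_coeff_mul_eq_of_isSymmetric {n : ℕ} {p : MvPolynomial (Fin n) ℝ}
    (hsym : p.IsSymmetric) (i j : Fin n) :
    ∑ d ∈ p.support, p.coeff d * (d i : ℝ) = ∑ d ∈ p.support, p.coeff d * (d j : ℝ) := by
  have hc : ∀ d : Fin n →₀ ℕ,
      p.coeff (Finsupp.equivMapDomain (Equiv.swap i j) d) = p.coeff d := by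
    intro d
    have h := coeff_rename_mapDomain (Equiv.swap i j) (Equiv.injective _) p d
    rwa [hsym, ← Finsupp.equivMapDomain_eq_mapDomain] at h
  refine Finset.sum_equiv (Finsupp.domCongr (M := ℕ) (Equiv.swap i j)).toEquiv ?_ ?_
  · intro d
    simp [hc]
  · intro d _
    simp [hc]

/-- For a symmetric homogeneous polynomial of degree `N`, the average exponent of every variable
(weighted by the coefficients, whose sum is `p(1,…,1)`) is `N / n`; stated without division. -/
theorem card_mul_sum_coeff_mul {n N : ℕ} {p : MvPolynomial (Fin n) ℝ}
    (hhom : p.IsHomogeneous N) (hsym : p.IsSymmetric) (i : Fin n) :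
    (n : ℝ) * ∑ d ∈ p.support, p.coeff d * (d i : ℝ) =
      N * eval (fun _ : Fin n => (1 : ℝ)) p := by
  calc (n : ℝ) * ∑ d ∈ p.support, p.coeff d * (d i : ℝ)
      = ∑ j : Fin n, ∑ d ∈ p.support, p.coeff d * (d j : ℝ) := by
        rw [Finset.sum_congr rfl fun j _ => sum_coeff_mul_eq_of_isSymmetric hsym j i]
        simp
    _ = ∑ d ∈ p.support, p.coeff d * (N : ℝ) := by
        rw [Finset.sum_comm]
        refine Finset.sum_congr rfl fun d hd => ?_
        have h : d.degree = N := by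
          rw [Finsupp.degree_eq_weight_one]
          exact hhom (mem_support_iff.1 hd)
        rw [← Finset.mul_sum, ← h, Finsupp.degree_eq_sum]
        push_cast
        rfl
    _ = N * eval (fun _ : Fin n => (1 : ℝ)) p := by
        rw [eval_one_eq_sum_coeff, ← Finset.sum_mul, mul_comm]

/-- The scalar inequality behind the theorem: weighted AM-GM applied to the monomials of `p`. -/
theorem eval_one_mul_prod_rpow_le_eval {n N : ℕ} (hn : 1 ≤ n) {p : MvPolynomial (Fin n) ℝ}
    (hp : p ≠ 0) (hhom : p.IsHomogeneous N) (hsym : p.IsSymmetric) (hcoeff : ∀ d, 0 ≤ p.coeff d)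
    {x : Fin n → ℝ} (hx : ∀ i, 0 ≤ x i) :
    eval (fun _ : Fin n => (1 : ℝ)) p * (∏ i, x i) ^ ((N : ℝ) / n) ≤ eval x p := by
  have hpos := eval_one_pos hp hcoeff
  have hn0 : (n : ℝ) ≠ 0 := by positivity
  set c := eval (fun _ : Fin n => (1 : ℝ)) p with hc
  have amgm := Real.geom_mean_le_arith_mean_weighted p.support (fun d => p.coeff d / c)
    (fun d => ∏ i, x i ^ d i) (fun d _ => div_nonneg (hcoeff d) hpos.le)
    (by rw [← Finset.sum_div, ← eval_one_eq_sum_coeff, div_self hpos.ne'])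
    (fun d _ => Finset.prod_nonneg fun i _ => pow_nonneg (hx i) _)
  have hleft : ∏ d ∈ p.support, (∏ i, x i ^ d i) ^ (p.coeff d / c) =
      (∏ i, x i) ^ ((N : ℝ) / n) := by
    calc ∏ d ∈ p.support, (∏ i, x i ^ d i) ^ (p.coeff d / c)
        = ∏ d ∈ p.support, ∏ i, x i ^ (p.coeff d * (d i : ℝ) / c) := by
          refine Finset.prod_congr rfl fun d _ => ?_
          rw [← Real.finsetProd_rpow _ _ fun i _ => pow_nonneg (hx i) _]
          refine Finset.prod_congr rfl fun i _ => ?_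
          rw [← Real.rpow_natCast, ← Real.rpow_mul (hx i)]
          congr 1
          ring
      _ = ∏ i, x i ^ ((N : ℝ) / n) := by
          rw [Finset.prod_comm]
          refine Finset.prod_congr rfl fun i _ => ?_
          rw [← Real.rpow_sum_of_nonneg (hx i) fun d _ =>
            div_nonneg (mul_nonneg (hcoeff d) (Nat.cast_nonneg _)) hpos.le, ← Finset.sum_div]
          congr 1
          rw [div_eq_div_iff hpos.ne' hn0, mul_comm]
          exact card_mul_sum_coeff_mul hhom hsym i
      _ = (∏ i, x i) ^ ((N : ℝ) / n) := Real.finsetProd_rpow _ _ (fun i _ => hx i) _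
  have hright : ∑ d ∈ p.support, p.coeff d / c * ∏ i, x i ^ d i = eval x p / c := by
    rw [eval_eq', Finset.sum_div]
    exact Finset.sum_congr rfl fun d _ => by ring
  rw [hleft, hright, le_div_iff₀ hpos] at amgm
  linarith

/-- Theorem 2.3 / Note 2.4 (real case): for a nonzero symmetric homogeneous
polynomial `p` of degree `N` with coefficients `≥ 0`, one has `p(1,…,1) > 0`, and
for every real symmetric positive semidefinite matrix `A` with eigenvalues
`λ₁(A),…,λₙ(A)`, `p(λ(A))^{1/N} ≥ p(1,…,1)^{1/N} · (det A)^{1/n}`. -/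
theorem determinant_majorization_real_symmetric_matrices
    (n N : ℕ) (hn : 1 ≤ n) (hN : 1 ≤ N)
    (p : MvPolynomial (Fin n) ℝ) (hp : p ≠ 0)
    (hhom : p.IsHomogeneous N)
    (hsym : p.IsSymmetric)
    (hcoeff : ∀ d, 0 ≤ p.coeff d) :
    0 < eval (fun _ : Fin n => (1 : ℝ)) p ∧
    ∀ (A : Matrix (Fin n) (Fin n) ℝ) (hA : A.PosSemidef),
      (eval (fun _ : Fin n => (1 : ℝ)) p) ^ ((1 : ℝ) / N) * A.det ^ ((1 : ℝ) / n) ≤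
        (eval hA.isHermitian.eigenvalues p) ^ ((1 : ℝ) / N) := by
  refine ⟨eval_one_pos hp hcoeff, fun A hA => ?_⟩
  have hpos := eval_one_pos hp hcoeff
  have hN0 : (N : ℝ) ≠ 0 := by positivity
  have hdet : A.det = ∏ i, hA.isHermitian.eigenvalues i := by
    simpa using hA.isHermitian.det_eq_prod_eigenvalues
  have hdet0 : 0 ≤ A.det := hA.det_nonneg
  have key := eval_one_mul_prod_rpow_le_eval hn hp hhom hsym hcoeff hA.eigenvalues_nonneg
  rw [← hdet] at key
  have hroot : A.det ^ ((1 : ℝ) / n) = (A.det ^ ((N : ℝ) / n)) ^ ((1 : ℝ) / N) := by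
    rw [← Real.rpow_mul hdet0]
    congr 1
    field_simp
  rw [hroot, ← Real.mul_rpow hpos.le (Real.rpow_nonneg hdet0 _)]
  exact Real.rpow_le_rpow (mul_nonneg hpos.le (Real.rpow_nonneg hdet0 _)) key (by positivity)
end

section
/- Let n ≥ 1 and N ≥ 1 be integers and let p ≠ 0 be a homogeneous real polynomial of degree N in n variables which is symmetric (invariant under every permutation of its variables) and has all coefficients ≥ 0. Then for every complex Hermitian positive semidefinite n×n matrix A with (real) eigenvalues λ₁(A),…,λₙ(A) listed with multiplicity, one has p(λ₁(A),…,λₙ(A))^{1/N} ≥ p(1,…,1)^{1/N} · (λ₁(A)⋯λₙ(A))^{1/n}, where λ₁(A)⋯λₙ(A) is the (real, nonnegative) complex determinant det_ℂ A of A. -/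
/-!
The inequality is AM–GM applied monomial by monomial. Since `p` is symmetric, its value at `x` is
the average of its values at the `n` cyclic shifts of `x`; cyclic shifts already suffice in place
of the full symmetric group. For a single monomial `x ^ d` of degree `N`, the product over all
shifts is `(∏ x i) ^ N`, because each exponent `d i` meets every variable exactly once. Hence the
average over the shifts is at least `((∏ x i) ^ (1 / n)) ^ N` (`card_mul_geom_mean_pow_le`).
Summing with the nonnegative coefficients gives
`p(1, …, 1) * ((∏ x i) ^ (1 / n)) ^ N ≤ p(x)` for every nonnegative `x`
(`eval_one_mul_geom_mean_pow_le`), and the theorem is the `N`-th root of this at the eigenvalues.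
-/

open MvPolynomial
open scoped ComplexOrder

/-- AM–GM for the orbit of one monomial under cyclic shifts of the variables. -/
lemma card_mul_geom_mean_pow_le {n : ℕ} [NeZero n] (x : Fin n → ℝ) (hx : ∀ i, 0 ≤ x i)
    (d : Fin n → ℕ) :
    n * ((∏ i, x i) ^ ((1 : ℝ) / n)) ^ (∑ i, d i) ≤ ∑ k, ∏ i, x (i + k) ^ d i := by
  have hnpos : (0 : ℝ) < n := by exact_mod_cast Nat.pos_of_ne_zero (NeZero.ne n)
  have hP : 0 ≤ ∏ i, x i := Finset.prod_nonneg fun i _ => hx i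
  have amgm := Real.geom_mean_le_arith_mean Finset.univ (fun _ : Fin n => (1 : ℝ))
    (fun k => ∏ i, x (i + k) ^ d i) (by simp) (by simpa using hnpos)
    (fun k _ => Finset.prod_nonneg fun i _ => pow_nonneg (hx _) _)
  have hprod : ∏ k, ∏ i, x (i + k) ^ d i = (∏ i, x i) ^ (∑ i, d i) := by
    rw [Finset.prod_comm, ← Finset.prod_pow_eq_pow_sum]
    refine Finset.prod_congr rfl fun i _ => ?_
    rw [Finset.prod_pow]
    congr 1
    exact Equiv.prod_comp (Equiv.addLeft i) x
  simp only [Real.rpow_one, one_mul, Finset.sum_const, Finset.card_univ, Fintype.card_fin,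
    nsmul_eq_mul, mul_one, hprod] at amgm
  rw [le_div_iff₀ hnpos, ← Real.rpow_natCast_mul hP, mul_comm ((_ : ℕ) : ℝ),
    Real.rpow_mul_natCast hP] at amgm
  rw [one_div, mul_comm]
  exact amgm

lemma eval_one_mul_geom_mean_pow_le {n N : ℕ} [NeZero n] {p : MvPolynomial (Fin n) ℝ}
    (hhom : p.IsHomogeneous N) (hsym : p.IsSymmetric) (hcoeff : ∀ d, 0 ≤ p.coeff d)
    (x : Fin n → ℝ) (hx : ∀ i, 0 ≤ x i) :
    eval (fun _ => (1 : ℝ)) p * ((∏ i, x i) ^ ((1 : ℝ) / n)) ^ N ≤ eval x p := by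
  have hnpos : (0 : ℝ) < n := by exact_mod_cast Nat.pos_of_ne_zero (NeZero.ne n)
  have hshift : ∀ k : Fin n, eval (fun i => x (i + k)) p = eval x p := fun k => by
    conv_rhs => rw [← hsym (Equiv.addRight k), eval_rename]
    rfl
  have havg : n * eval x p = ∑ d ∈ p.support, p.coeff d * ∑ k, ∏ i, x (i + k) ^ d i := by
    simp_rw [Finset.mul_sum]
    rw [Finset.sum_comm]
    simp_rw [← eval_eq' (fun i => x (i + _)), hshift]
    simp
  refine le_of_mul_le_mul_left ?_ hnpos
  rw [havg, eval_eq', Finset.sum_mul, Finset.mul_sum]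
  refine Finset.sum_le_sum fun d hd => ?_
  have hdeg : ∑ i, d i = N := by
    rw [← Finsupp.degree_eq_sum, Finsupp.degree_apply]
    exact (hhom.degree_eq_sum_deg_support hd).symm
  have := mul_le_mul_of_nonneg_left (card_mul_geom_mean_pow_le x hx d) (hcoeff d)
  rw [hdeg] at this
  simp only [one_pow, Finset.prod_const_one, mul_one]
  linarith

/-- Theorem 2.3 / (1.3) (complex case): for a nonzero symmetric homogeneous
polynomial `p` of degree `N` with coefficients `≥ 0`, and every complex Hermitian
positive semidefinite matrix `A` with real eigenvalues `λ₁(A),…,λₙ(A)`,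
`p(λ(A))^{1/N} ≥ p(1,…,1)^{1/N} · (λ₁(A)⋯λₙ(A))^{1/n}`, where the product of the
eigenvalues is the complex determinant of `A`. -/
theorem determinant_majorization_hermitian_matrices
    (n N : ℕ) (hn : 1 ≤ n) (hN : 1 ≤ N)
    (p : MvPolynomial (Fin n) ℝ) (hp : p ≠ 0)
    (hhom : p.IsHomogeneous N)
    (hsym : p.IsSymmetric)
    (hcoeff : ∀ d, 0 ≤ p.coeff d) :
    ∀ (A : Matrix (Fin n) (Fin n) ℂ) (hA : A.PosSemidef),
      (eval (fun _ : Fin n => (1 : ℝ)) p) ^ ((1 : ℝ) / N) *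
          (∏ i, hA.isHermitian.eigenvalues i) ^ ((1 : ℝ) / n) ≤
        (eval hA.isHermitian.eigenvalues p) ^ ((1 : ℝ) / N) := by
  intro A hA
  have : NeZero n := ⟨by omega⟩
  have hx := hA.eigenvalues_nonneg
  have key := eval_one_mul_geom_mean_pow_le hhom hsym hcoeff _ hx
  have hP : 0 ≤ ∏ i, hA.isHermitian.eigenvalues i := Finset.prod_nonneg fun i _ => hx i
  have hg := Real.rpow_nonneg hP ((1 : ℝ) / n)
  have hone : 0 ≤ eval (fun _ : Fin n => (1 : ℝ)) p := by
    rw [eval_eq']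
    exact Finset.sum_nonneg fun d _ => mul_nonneg (hcoeff d) (by simp)
  have hroot := Real.rpow_le_rpow (mul_nonneg hone (pow_nonneg hg N)) key
    (by positivity : (0 : ℝ) ≤ 1 / N)
  rwa [Real.mul_rpow hone (pow_nonneg hg N), one_div (N : ℝ),
    Real.pow_rpow_inv_natCast hg (by omega), ← one_div] at hroot
end

section
/- Let n ≥ 1 and N ≥ 1 be integers and let F be a real-valued function on n×n real matrices given by evaluating a homogeneous polynomial of degree N in the matrix entries, such that: (i) (O(n)-invariance) F(g A gᵗ) = F(A) for every orthogonal n×n matrix g and every real symmetric A; (ii) (hyperbolicity with respect to the identity) for every real symmetric n×n matrix A there exists a real univariate polynomial of degree N, equal to the function t ↦ F(tI + A), all N of whose roots (counted with multiplicity) are real; (iii) (positivity) F(A) > 0 for every real symmetric positive definite n×n matrix A. Then there exists a homogeneous real polynomial p of degree N in n variables, symmetric under all permutations of its variables, with all coefficients ≥ 0, with p(1,…,1) = F(I) > 0, with all first-order partial derivatives of p at (1,…,1) equal to the common value (N/n)·F(I) > 0, and such that F(A) = p(λ₁(A),…,λₙ(A)) for every real symmetric n×n matrix A, where λ₁(A),…,λₙ(A)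 are the eigenvalues of A counted with multiplicity. -/
/-!
Put `p(x) = F(diag x)`. Conjugation by permutation matrices shows that `p` is symmetric, and the
spectral theorem gives `F(A) = p(λ(A))`. Symmetry and Euler's identity determine the first partials
at `(1,…,1)`. The substance is the nonnegativity of the coefficients of `p`.

*Stability* (`posStable_of_hyperbolic`, after Gårding). The polynomial `p` has no complex zero `z`
with `Re zᵢ > 0` for all `i`. Indeed, fix `α > 0`, a positive vector `v` and a real vector `b`, and
consider the zeros `τ` of `τ ↦ p(α·1 + i s b + τ v)` for `s ∈ ℝ`. Hyperbolicity in the direction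
`(1,…,1)` excludes zeros on the imaginary axis, and the leading coefficient `p(v) > 0` does not
depend on `s`. Hence the set of `s` for which there is a zero with `Re τ ≥ 0` is both open and
closed in `ℝ`. It does not contain `0`, since for `s = 0` all zeros are negative real numbers;
so it is empty.

*Derivatives* (`PosStable.directional`). For a positive vector `w`, the logarithmic derivative
`∂_w p(z) / p(z)` is the sum of `-1/r` over the roots `r` of `s ↦ p(z + s w)`. All these roots have
negative real part, so the sum has positive real part. Therefore `∂_w p` has no zeros with
`Re zᵢ > 0` for all `i` and is positive on the positive orthant.

*Coefficients* (`PosStable.coeff_nonneg`). By induction on the degree `∂_w p` has nonnegative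
coefficients for each `w > 0`; letting `w → eᵢ`, so has each `∂ᵢ p`, and the coefficients of `p`
are positive multiples of those of its partials.
-/

open MvPolynomial

/-! ### Restriction of a homogeneous polynomial to complex lines -/

theorem degree_of_mem_support {σ : Type*} [Fintype σ] {p : MvPolynomial σ ℝ} {N : ℕ}
    (hp : p.IsHomogeneous N) {d : σ →₀ ℕ} (hd : d ∈ p.support) : ∑ i, d i = N := by
  by_contra h
  rw [← Finsupp.degree_eq_sum] at h
  exact (mem_support_iff.mp hd) (hp.coeff_eq_zero h)

theorem aeval_scale {σ : Type*} [Fintype σ] {p : MvPolynomial σ ℝ} {N : ℕ}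
    (hp : p.IsHomogeneous N) (c : ℂ) (z : σ → ℂ) :
    aeval (fun i => c * z i) p = c ^ N * aeval z p := by
  simp only [aeval_def, eval₂_eq', Finset.mul_sum]
  refine Finset.sum_congr rfl fun d hd => ?_
  simp only [mul_pow, Finset.prod_mul_distrib, Finset.prod_pow_eq_pow_sum,
    degree_of_mem_support hp hd]
  ring

theorem aeval_ofReal {σ : Type*} (p : MvPolynomial σ ℝ) (x : σ → ℝ) :
    aeval (fun i => (x i : ℂ)) p = ((eval x p : ℝ) : ℂ) := by
  have := aeval_algebraMap_apply (A := ℝ) ℂ x p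
  simpa [aeval_eq_eval, Function.comp_def] using this

/-- The univariate polynomial `t ↦ p(z + t w)`, for complex vectors `z` and `w`. -/
noncomputable def linePoly {σ : Type*} (p : MvPolynomial σ ℝ) (z w : σ → ℂ) : Polynomial ℂ :=
  aeval (fun i => Polynomial.C (z i) + Polynomial.C (w i) * Polynomial.X) p

theorem eval_linePoly {σ : Type*} (p : MvPolynomial σ ℝ) (z w : σ → ℂ) (t : ℂ) :
    (linePoly p z w).eval t = aeval (fun i => z i + t * w i) p := by
  rw [linePoly]
  induction p using MvPolynomial.induction_on with
  | C a => simp [Polynomial.algebraMap_apply]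
  | add p q hp hq => simp [hp, hq]
  | mul_X p i hp =>
    simp only [map_mul, aeval_X, Polynomial.eval_mul, hp, Polynomial.eval_add, Polynomial.eval_C,
      Polynomial.eval_X, mul_comm t]

theorem natDegree_linePoly_le {σ : Type*} [Fintype σ] {p : MvPolynomial σ ℝ} {N : ℕ}
    (hp : p.IsHomogeneous N) (z w : σ → ℂ) : (linePoly p z w).natDegree ≤ N := by
  simp only [linePoly, aeval_def, eval₂_eq']
  refine Polynomial.natDegree_sum_le_of_forall_le _ _ fun d hd => ?_
  rw [Polynomial.algebraMap_apply]
  refine (Polynomial.natDegree_C_mul_le _ _).trans ?_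
  refine (Polynomial.natDegree_prod_le _ _).trans ?_
  rw [← degree_of_mem_support hp hd]
  refine Finset.sum_le_sum fun i _ => ?_
  refine Polynomial.natDegree_pow_le_of_le (d i) (m := 1) ?_ |>.trans (by simp)
  compute_degree

/-- The coefficient of `t ^ N` in `p(z + t w)` is `p(w)`, independently of `z`. -/
theorem coeff_linePoly {σ : Type*} [Fintype σ] {p : MvPolynomial σ ℝ} {N : ℕ}
    (hp : p.IsHomogeneous N) (z w : σ → ℂ) : (linePoly p z w).coeff N = aeval w p := by
  simp only [linePoly, aeval_def, eval₂_eq', Polynomial.finsetSum_coeff]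
  refine Finset.sum_congr rfl fun d hd => ?_
  rw [Polynomial.algebraMap_apply, Polynomial.coeff_C_mul]
  congr 1
  have h1 : ∀ i, (Polynomial.C (z i) + Polynomial.C (w i) * Polynomial.X).natDegree ≤ 1 :=
    fun i => by compute_degree
  have key : ∀ s : Finset σ,
      (∏ i ∈ s, (Polynomial.C (z i) + Polynomial.C (w i) * Polynomial.X) ^ d i).natDegree
        ≤ ∑ i ∈ s, d i ∧
      (∏ i ∈ s, (Polynomial.C (z i) + Polynomial.C (w i) * Polynomial.X) ^ d i).coeff
        (∑ i ∈ s, d i) = ∏ i ∈ s, w i ^ d i := by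
    intro s
    classical
    induction s using Finset.induction_on with
    | empty => simp
    | insert a s ha ih =>
      simp only [Finset.prod_insert ha, Finset.sum_insert ha]
      have h2 := Polynomial.natDegree_pow_le_of_le (d a) (h1 a)
      rw [mul_one] at h2
      refine ⟨Polynomial.natDegree_mul_le_of_le h2 ih.1, ?_⟩
      rw [Polynomial.coeff_mul_add_eq_of_natDegree_le h2 ih.1, ih.2]
      congr 1
      have := Polynomial.coeff_pow_of_natDegree_le (m := d a) (h1 a)
      rw [mul_one] at this
      rw [this]
      simp
  have := (key Finset.univ).2
  rwa [degree_of_mem_support hp hd] at this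

/-- Chain rule: the derivative of `t ↦ p(z + t w)` at `0` is the directional derivative of `p`. -/
theorem eval_derivative_linePoly {σ : Type*} [Fintype σ] (p : MvPolynomial σ ℝ) (z : σ → ℂ)
    (w : σ → ℝ) :
    (linePoly p z (fun i => (w i : ℂ))).derivative.eval 0 =
      aeval z (∑ i, C (w i) * pderiv i p) := by
  classical
  induction p using MvPolynomial.induction_on with
  | C a => simp [linePoly, Polynomial.algebraMap_apply]
  | add p q hp hq =>
    have : linePoly (p + q) z (fun i => (w i : ℂ)) = linePoly p z (fun i => (w i : ℂ)) +
      linePoly q z (fun i => (w i : ℂ)) := by simp [linePoly]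
    simp only [this, map_add, Polynomial.eval_add, hp, hq, mul_add, Finset.sum_add_distrib]
  | mul_X p i hp =>
    have : linePoly (p * X i) z (fun i => (w i : ℂ)) = linePoly p z (fun i => (w i : ℂ)) *
      (Polynomial.C (z i) + Polynomial.C (w i : ℂ) * Polynomial.X) := by simp [linePoly]
    have h0 := eval_linePoly p z (fun i => (w i : ℂ)) 0
    simp only [zero_mul, add_zero] at h0
    have h2 : ∑ j, C (w j) * pderiv j (p * X i) =
        C (w i) * p + (∑ j, C (w j) * pderiv j p) * X i := by
      have : ∀ j, C (w j) * pderiv j (p * X i) =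
          (if j = i then C (w j) * p else 0) + C (w j) * pderiv j p * X i := by
        intro j
        rw [pderiv_mul, pderiv_X]
        by_cases h : j = i
        · subst h; simp; ring
        · simp [h, Ne.symm h]; ring
      simp_rw [this, Finset.sum_add_distrib, Finset.sum_mul]
      simp
    rw [this, h2]
    simp only [Polynomial.derivative_mul, Polynomial.eval_add, Polynomial.eval_mul, hp, h0,
      map_add, map_mul]
    simp
    ring

/-! ### Stable polynomials and their directional derivatives -/

theorem re_sum_pos (s : Multiset ℂ) (h0 : s ≠ 0) (hs : ∀ r ∈ s, r.re < 0) :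
    0 < (s.map fun r => 1 / (0 - r)).sum.re := by
  have h1 : ∀ r : ℂ, r.re < 0 → 0 < (1 / (0 - r)).re := by
    intro r hr
    have : r ≠ 0 := fun h => by simp [h] at hr
    rw [zero_sub, one_div, Complex.inv_re]
    refine div_pos (by simpa using hr) ?_
    simpa [Complex.normSq_pos] using this
  have h2 : ∀ s : Multiset ℂ, (∀ r ∈ s, r.re < 0) →
      0 ≤ (s.map fun r => 1 / (0 - r)).sum.re := by
    intro s
    induction s using Multiset.induction_on with
    | empty => simp
    | cons a s ih =>
      intro h
      rw [Multiset.map_cons, Multiset.sum_cons, Complex.add_re]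
      exact add_nonneg (h1 a (h a (Multiset.mem_cons_self a s))).le
        (ih fun r hr => h r (Multiset.mem_cons_of_mem hr))
  obtain ⟨a, ha⟩ := Multiset.exists_mem_of_ne_zero h0
  obtain ⟨t, rfl⟩ := Multiset.exists_cons_of_mem ha
  rw [Multiset.map_cons, Multiset.sum_cons, Complex.add_re]
  exact add_pos_of_pos_of_nonneg (h1 a (hs a ha))
    (h2 t fun r hr => hs r (Multiset.mem_cons_of_mem hr))

/-- A homogeneous real polynomial of degree `N` which is positive on the open positive orthant and
has no complex zero all of whose coordinates have positive real part. For homogeneous polynomials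
the latter is stability in the usual sense, with the right half-plane in place of the upper one. -/
structure PosStable {σ : Type*} (N : ℕ) (p : MvPolynomial σ ℝ) : Prop where
  hom : p.IsHomogeneous N
  ne_zero : ∀ z : σ → ℂ, (∀ i, 0 < (z i).re) → aeval z p ≠ 0
  pos : ∀ x : σ → ℝ, (∀ i, 0 < x i) → 0 < eval x p

/-- The roots `r` of `s ↦ p(z + s w)` have `Re r < 0`, and the logarithmic derivative at `0` is the
sum of `1 / (0 - r)`. -/
theorem PosStable.logDeriv_re_pos {σ : Type*} [Fintype σ] {N : ℕ} {p : MvPolynomial σ ℝ}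
    (hp : PosStable (N + 1) p) {w : σ → ℝ} (hw : ∀ i, 0 < w i) {z : σ → ℂ}
    (hz : ∀ i, 0 < (z i).re) :
    0 < (aeval z (∑ i, C (w i) * pderiv i p) / aeval z p).re := by
  set P := linePoly p z (fun i => (w i : ℂ)) with hP
  have h0 : P.eval 0 = aeval z p := by simp [hP, eval_linePoly]
  have hne : P.eval 0 ≠ 0 := h0 ▸ hp.ne_zero z hz
  have hdeg : P.natDegree = N + 1 := by
    refine le_antisymm (natDegree_linePoly_le hp.hom _ _) (Polynomial.le_natDegree_of_ne_zero ?_)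
    rw [hP, coeff_linePoly hp.hom]
    exact hp.ne_zero _ (by simpa using hw)
  have hs : P.Splits := IsAlgClosed.splits P
  rw [← eval_derivative_linePoly, ← h0, hs.eval_derivative_div_eval_of_ne_zero hne]
  apply re_sum_pos
  · intro h
    have := Polynomial.splits_iff_card_roots.mp hs
    rw [h, hdeg] at this
    simp at this
  · intro r hr
    by_contra hcon
    rw [not_lt] at hcon
    have h3 : P.eval r = 0 := (Polynomial.mem_roots'.mp hr).2
    rw [hP, eval_linePoly] at h3
    refine hp.ne_zero _ (fun i => ?_) h3
    have := mul_nonneg hcon (hw i).le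
    have := hz i
    simp
    linarith

theorem PosStable.directional {σ : Type*} [Fintype σ] {N : ℕ} {p : MvPolynomial σ ℝ}
    (hp : PosStable (N + 1) p) {w : σ → ℝ} (hw : ∀ i, 0 < w i) :
    PosStable N (∑ i, C (w i) * pderiv i p) where
  hom := by
    refine IsHomogeneous.sum _ _ _ fun i _ => ?_
    simpa using (isHomogeneous_C σ (w i)).mul (hp.hom.pderiv (i := i))
  ne_zero z hz h := by
    have := hp.logDeriv_re_pos hw hz
    rw [h] at this
    simp at this
  pos x hx := by
    have := hp.logDeriv_re_pos hw (z := fun i => (x i : ℂ)) (by simpa using hx)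
    rw [aeval_ofReal, aeval_ofReal, ← Complex.ofReal_div, Complex.ofReal_re] at this
    exact (div_pos_iff_of_pos_right (hp.pos x hx)).mp this

theorem PosStable.coeff_nonneg {σ : Type*} [Fintype σ] {N : ℕ} {p : MvPolynomial σ ℝ}
    (hp : PosStable N p) (d : σ →₀ ℕ) : 0 ≤ p.coeff d := by
  classical
  induction N generalizing p d with
  | zero =>
    by_cases hd : d.degree = 0
    · have h1 := hp.pos (fun _ => 1) (fun _ => one_pos)
      have h2 := totalDegree_eq_zero_iff_eq_C.mp (Nat.le_zero.mp hp.hom.totalDegree_le)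
      rw [h2, eval_C] at h1
      rw [(Finsupp.degree_eq_zero_iff d).mp hd]
      exact h1.le
    · rw [hp.hom.coeff_eq_zero hd]
  | succ N ih =>
    by_cases hd : d = 0
    · subst hd
      rw [hp.hom.coeff_eq_zero (by simp)]
    obtain ⟨i, hi⟩ : ∃ i, d i ≠ 0 := by
      by_contra! h
      exact hd (Finsupp.ext h)
    set m := d - Finsupp.single i 1 with hm
    have hdm : d = m + Finsupp.single i 1 :=
      (tsub_add_cancel_of_le (Finsupp.single_le_iff.mpr (Nat.one_le_iff_ne_zero.mpr hi))).symm
    -- the directional derivative along the positive vector `eᵢ + ε·1`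
    have key : ∀ ε : ℝ, 0 < ε →
        0 ≤ (pderiv i p).coeff m + ε * ∑ j, (pderiv j p).coeff m := by
      intro ε hε
      have h := ih (hp.directional (w := fun j => (if j = i then 1 else 0) + ε)
        (fun j => by split_ifs <;> linarith)) m
      simpa [coeff_sum, coeff_C_mul, add_mul, Finset.sum_add_distrib, Finset.mul_sum] using h
    have hnn : 0 ≤ (pderiv i p).coeff m := by
      have hc : Filter.Tendsto (fun ε : ℝ => (pderiv i p).coeff m +
          ε * ∑ j, (pderiv j p).coeff m) (nhdsWithin 0 (Set.Ioi 0))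
          (nhds ((pderiv i p).coeff m + 0 * ∑ j, (pderiv j p).coeff m)) :=
        (Continuous.tendsto (by fun_prop) 0).mono_left nhdsWithin_le_nhds
      rw [zero_mul, add_zero] at hc
      exact ge_of_tendsto hc (Filter.eventually_of_mem self_mem_nhdsWithin key)
    rw [coeff_pderiv, ← hdm] at hnn
    exact nonneg_of_mul_nonneg_left hnn (by positivity)

/-! ### Stability from hyperbolicity in the direction `(1,…,1)` -/

theorem continuous_aeval {σ : Type*} [Fintype σ] (p : MvPolynomial σ ℝ) :
    Continuous fun z : σ → ℂ => aeval z p := by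
  simp only [aeval_def, eval₂_eq']
  fun_prop

/-- Hyperbolicity rotated by `i`: since `p` is homogeneous, `p(z·1 + i b) = iᴺ p(-i z·1 + b)`. -/
theorem aeval_ne_zero_of_hyperbolic {σ : Type*} [Fintype σ] {N : ℕ} {p : MvPolynomial σ ℝ}
    (hom : p.IsHomogeneous N)
    (hyp : ∀ (x : σ → ℝ) (t : ℂ), t.im ≠ 0 → aeval (fun i => t + (x i : ℂ)) p ≠ 0)
    (b : σ → ℝ) {z : ℂ} (hz : z.re ≠ 0) :
    aeval (fun i => z + Complex.I * (b i : ℂ)) p ≠ 0 := by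
  have h := hyp b (-Complex.I * z) (by simpa using hz)
  have h2 := aeval_scale hom Complex.I (fun i => -Complex.I * z + (b i : ℂ))
  have h3 : (fun i => Complex.I * (-Complex.I * z + (b i : ℂ))) =
      fun i => z + Complex.I * (b i : ℂ) := by
    funext i
    linear_combination (-z) * Complex.I_mul_I
  rw [h3] at h2
  rw [h2]
  exact mul_ne_zero (pow_ne_zero _ Complex.I_ne_zero) h

/-- The starting point `s = 0` of the deformation: all zeros `τ` of `p(α·1 + τ v)` are negative,
because `p(α·1 + τ v) = τᴺ p((α/τ)·1 + v)` and `p` is positive at `μ·1 + v` for real `μ ≥ 0`. -/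
theorem aeval_base_ne_zero {σ : Type*} [Fintype σ] {N : ℕ} {p : MvPolynomial σ ℝ}
    (hom : p.IsHomogeneous N)
    (hyp : ∀ (x : σ → ℝ) (t : ℂ), t.im ≠ 0 → aeval (fun i => t + (x i : ℂ)) p ≠ 0)
    (pos : ∀ x : σ → ℝ, (∀ i, 0 < x i) → 0 < eval x p)
    {α : ℝ} (hα : 0 < α) {v : σ → ℝ} (hv : ∀ i, 0 < v i) {τ : ℂ} (hτ : 0 ≤ τ.re) :
    aeval (fun i => (α : ℂ) + τ * (v i : ℂ)) p ≠ 0 := by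
  by_cases h0 : τ = 0
  · have := pos (fun _ => α) (fun _ => hα)
    simp only [h0, zero_mul, add_zero]
    rw [aeval_ofReal p (fun _ => α)]
    exact_mod_cast this.ne'
  have h2 := aeval_scale hom τ (fun i => (α : ℂ) / τ + (v i : ℂ))
  have h3 : (fun i => τ * ((α : ℂ) / τ + (v i : ℂ))) = fun i => (α : ℂ) + τ * (v i : ℂ) := by
    funext i
    field_simp
  rw [h3] at h2
  rw [h2]
  refine mul_ne_zero (pow_ne_zero _ h0) ?_
  by_cases him : ((α : ℂ) / τ).im = 0
  · obtain ⟨μ, hμ⟩ : ∃ μ : ℝ, (α : ℂ) / τ = μ := ⟨((α : ℂ) / τ).re, by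
      apply Complex.ext <;> simp [him]⟩
    have hμ0 : 0 ≤ μ := by
      have : μ = ((α : ℂ) / τ).re := by rw [hμ]; simp
      rw [this, Complex.div_re]
      simp
      exact div_nonneg (mul_nonneg hα.le hτ) (Complex.normSq_nonneg _)
    have := pos (fun i => μ + v i) (fun i => by have := hv i; linarith)
    have h4 := aeval_ofReal p (fun i => μ + v i)
    push_cast at h4
    rw [hμ, h4]
    exact_mod_cast this.ne'
  · exact hyp v _ him

/-- The deformation argument: the set of `s` for which `p(α·1 + i s b + τ v)` has a zero `τ` with
`Re τ ≥ 0` is clopen in `ℝ` and omits `0`. -/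
theorem aeval_path_ne_zero {σ : Type*} [Fintype σ] {N : ℕ} {p : MvPolynomial σ ℝ}
    (hom : p.IsHomogeneous N)
    (hyp : ∀ (x : σ → ℝ) (t : ℂ), t.im ≠ 0 → aeval (fun i => t + (x i : ℂ)) p ≠ 0)
    (pos : ∀ x : σ → ℝ, (∀ i, 0 < x i) → 0 < eval x p)
    {α : ℝ} (hα : 0 < α) {v : σ → ℝ} (hv : ∀ i, 0 < v i) (b : σ → ℝ) (s : ℝ) {τ : ℂ}
    (hτ : 0 ≤ τ.re) :
    aeval (fun i => (α + Complex.I * (s * b i : ℝ) : ℂ) + τ * (v i : ℂ)) p ≠ 0 := by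
  set f : ℝ × ℂ → ℂ := fun q =>
    aeval (fun i => (α + Complex.I * (q.1 * b i : ℝ) : ℂ) + q.2 * (v i : ℂ)) p with hf
  have hfc : Continuous f := (continuous_aeval p).comp (by fun_prop)
  have hpv : aeval (fun i => (v i : ℂ)) p ≠ 0 := by
    rw [aeval_ofReal]
    exact_mod_cast (pos v hv).ne'
  have hax : ∀ s : ℝ, ∀ τ : ℂ, τ.re = 0 → f (s, τ) ≠ 0 := by
    intro s τ hτ0
    have h := aeval_ne_zero_of_hyperbolic hom hyp (fun i => s * b i + τ.im * v i) (z := α)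
      (by simpa using hα.ne')
    have h2 : (fun i => (α : ℂ) + Complex.I * ((s * b i + τ.im * v i : ℝ) : ℂ)) =
        fun i => (α + Complex.I * (s * b i : ℝ) : ℂ) + τ * (v i : ℂ) := by
      funext i
      apply Complex.ext <;> simp [hτ0]
    rwa [h2] at h
  set S : Set ℝ := {s | ∃ τ : ℂ, 0 ≤ τ.re ∧ f (s, τ) = 0} with hS
  -- A zero with `Re τ₀ > 0` persists: otherwise all roots for `s` near `s₀` lie in the left
  -- half-plane, at distance at least `Re τ₀` from `τ₀`, which bounds `|f (s, τ₀)|` from below.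
  have hopen : IsOpen S := by
    rw [isOpen_iff_mem_nhds]
    rintro s₀ ⟨τ₀, hτ₀, hz⟩
    have hpos : 0 < τ₀.re := lt_of_le_of_ne hτ₀ fun h => hax s₀ τ₀ h.symm hz
    have hsmall : ∀ᶠ s in nhds s₀, ‖f (s, τ₀)‖ < ‖aeval (fun i => (v i : ℂ)) p‖ * τ₀.re ^ N := by
      have hc : Continuous fun s : ℝ => ‖f (s, τ₀)‖ := by fun_prop
      refine hc.continuousAt.eventually_lt continuousAt_const ?_
      rw [hz, norm_zero]
      exact mul_pos (norm_pos_iff.mpr hpv) (pow_pos hpos N)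
    filter_upwards [hsmall] with s hs
    by_contra hcon
    set P := linePoly p (fun i => (α + Complex.I * (s * b i : ℝ) : ℂ)) (fun i => (v i : ℂ)) with hP
    have hPe : ∀ t, P.eval t = f (s, t) := fun t => eval_linePoly _ _ _ _
    have hcoeff : P.coeff N = aeval (fun i => (v i : ℂ)) p := coeff_linePoly hom _ _
    have hdeg : P.natDegree = N :=
      le_antisymm (natDegree_linePoly_le hom _ _)
        (Polynomial.le_natDegree_of_ne_zero (by rw [hcoeff]; exact hpv))
    have hsp : P.Splits := IsAlgClosed.splits P
    have hcard := Polynomial.splits_iff_card_roots.mp hsp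
    refine absurd hs (not_lt.mpr ?_)
    rw [← hPe, hsp.eval_eq_prod_roots, norm_mul, Polynomial.leadingCoeff, hdeg, hcoeff]
    refine mul_le_mul_of_nonneg_left ?_ (norm_nonneg _)
    have hgen : ∀ R : Multiset ℂ, (∀ r ∈ R, r.re < 0) →
        τ₀.re ^ R.card ≤ ‖(R.map fun r => τ₀ - r).prod‖ := by
      intro R
      induction R using Multiset.induction_on with
      | empty => simp
      | cons a R ih =>
        intro h
        rw [Multiset.map_cons, Multiset.prod_cons, norm_mul, Multiset.card_cons, pow_succ']
        refine mul_le_mul ?_ (ih fun r hr => h r (Multiset.mem_cons_of_mem hr))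
          (pow_nonneg hpos.le _) (norm_nonneg _)
        have h1 := h a (Multiset.mem_cons_self a R)
        have h2 := Complex.re_le_norm (τ₀ - a)
        rw [Complex.sub_re] at h2
        linarith
    have h := hgen P.roots fun r hr => by
      by_contra hneg
      exact hcon ⟨r, not_lt.mp hneg, by rw [← hPe]; exact (Polynomial.mem_roots'.mp hr).2⟩
    rwa [hcard, hdeg] at h
  have hclosed : IsClosed S := by
    rw [← isOpen_compl_iff, isOpen_iff_mem_nhds]
    intro s₀ hs₀
    -- `f (s, τ) = τᴺ g (s, 1/τ)` and `g (s₀, 0) = p(v) ≠ 0`, so the zeros `τ` stay bounded for `s`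
    -- near `s₀`, and compactness applies
    set g : ℝ × ℂ → ℂ := fun q =>
      aeval (fun i => q.2 * (α + Complex.I * (q.1 * b i : ℝ) : ℂ) + (v i : ℂ)) p with hg
    have hgc : Continuous g := (continuous_aeval p).comp (by fun_prop)
    have hg0 : g (s₀, 0) ≠ 0 := by simpa [hg] using hpv
    have hev : ∀ᶠ q in nhds s₀ ×ˢ nhds (0 : ℂ), g q ≠ 0 := by
      rw [← nhds_prod_eq]
      exact hgc.continuousAt.eventually_ne hg0
    obtain ⟨U, hU, V, hV, hUV⟩ := Filter.eventually_prod_iff.mp hev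
    obtain ⟨δ, hδ, hball⟩ := Metric.eventually_nhds_iff.mp hV
    set K : Set ℂ := Metric.closedBall 0 (2 / δ) ∩ {τ | 0 ≤ τ.re} with hK
    have hKc : IsCompact K := (isCompact_closedBall _ _).inter_right
      (isClosed_le continuous_const Complex.continuous_re)
    have hnear : ∀ᶠ s in nhds s₀, ∀ τ ∈ K, f (s, τ) ≠ 0 := by
      refine hKc.eventually_forall_of_forall_eventually fun τ hτ => ?_
      exact hfc.continuousAt.eventually_ne fun h => hs₀ ⟨τ, hτ.2, h⟩
    filter_upwards [hU, hnear] with s hsU hsK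
    rintro ⟨τ, hτ, hz⟩
    by_cases hin : ‖τ‖ ≤ 2 / δ
    · exact hsK τ ⟨by simpa using hin, hτ⟩ hz
    · rw [not_le] at hin
      have hτ0 : τ ≠ 0 := by
        rintro rfl
        rw [norm_zero] at hin
        exact absurd hin (not_lt.mpr (by positivity))
      have hinv : dist τ⁻¹ 0 < δ := by
        rw [dist_zero_right, norm_inv, inv_lt_comm₀ (norm_pos_iff.mpr hτ0) hδ]
        refine lt_trans ?_ hin
        rw [inv_eq_one_div]
        gcongr
        norm_num
      refine hUV hsU (hball hinv) ?_
      have h2 := aeval_scale hom τ⁻¹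
        (fun i => (α + Complex.I * (s * b i : ℝ) : ℂ) + τ * (v i : ℂ))
      have h3 : (fun i => τ⁻¹ * ((α + Complex.I * (s * b i : ℝ) : ℂ) + τ * (v i : ℂ))) =
          fun i => τ⁻¹ * (α + Complex.I * (s * b i : ℝ) : ℂ) + (v i : ℂ) := by
        funext i
        field_simp
      rw [h3] at h2
      change _ = _ * f (s, τ) at h2
      rw [hz, mul_zero] at h2
      exact h2
  have h0 : (0 : ℝ) ∉ S := by
    rintro ⟨τ, hτ, hz⟩
    refine aeval_base_ne_zero hom hyp pos hα hv hτ ?_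
    simpa [hf] using hz
  intro h
  rcases isClopen_iff.mp ⟨hclosed, hopen⟩ with hE | hE
  · have : s ∈ S := ⟨τ, hτ, h⟩
    rw [hE] at this
    exact this
  · exact h0 (hE ▸ Set.mem_univ _)

theorem posStable_of_hyperbolic {σ : Type*} [Fintype σ] {N : ℕ} {p : MvPolynomial σ ℝ}
    (hom : p.IsHomogeneous N)
    (hyp : ∀ (x : σ → ℝ) (t : ℂ), t.im ≠ 0 → aeval (fun i => t + (x i : ℂ)) p ≠ 0)
    (pos : ∀ x : σ → ℝ, (∀ i, 0 < x i) → 0 < eval x p) : PosStable N p where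
  hom := hom
  pos := pos
  ne_zero z hz := by
    obtain ⟨α, hα, hαz⟩ : ∃ α : ℝ, 0 < α ∧ ∀ i, α < (z i).re := by
      have : ∀ᶠ α in nhdsWithin (0 : ℝ) (Set.Ioi 0), ∀ i, α < (z i).re :=
        Filter.eventually_all.mpr fun i =>
          nhdsWithin_le_nhds (Iio_mem_nhds (hz i))
      obtain ⟨α, h1, h2⟩ := (this.and self_mem_nhdsWithin).exists
      exact ⟨α, h2, h1⟩
    have h := aeval_path_ne_zero hom hyp pos hα (v := fun i => (z i).re - α)
      (fun i => sub_pos.mpr (hαz i)) (fun i => (z i).im) 1 (τ := 1) (by simp)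
    have h2 : (fun i => (α + Complex.I * (1 * (z i).im : ℝ) : ℂ) + 1 * (((z i).re - α : ℝ) : ℂ)) =
        z := by
      funext i
      apply Complex.ext <;> simp
    rwa [h2] at h

/-! ### Real-rootedness, Euler's identity and the theorem -/

/-- If `t ↦ p(t·1 + x)` is a nonzero polynomial with only real roots, then its complexification
has no zero off the real axis. -/
theorem aeval_ne_zero_of_roots {σ : Type*} [Fintype σ] {p : MvPolynomial σ ℝ}
    (x : σ → ℝ) (q : Polynomial ℝ) (hq0 : q ≠ 0) (hq : q.roots.card = q.natDegree)
    (hqe : ∀ t : ℝ, q.eval t = eval (fun i => t + x i) p) (t : ℂ) (ht : t.im ≠ 0) :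
    aeval (fun i => t + (x i : ℂ)) p ≠ 0 := by
  have hmap : q.map (algebraMap ℝ ℂ) = linePoly p (fun i => (x i : ℂ)) (fun _ => 1) := by
    refine Polynomial.eq_of_infinite_eval_eq _ _ ((Set.infinite_range_of_injective
      Complex.ofReal_injective).mono ?_)
    rintro _ ⟨s, rfl⟩
    have h1 := aeval_ofReal p (fun i => s + x i)
    have h2 := Polynomial.eval_map_algebraMap (B := ℂ) q (s : ℂ)
    have h3 : Polynomial.aeval (s : ℂ) q = ((q.eval s : ℝ) : ℂ) :=
      Polynomial.aeval_algebraMap_apply_eq_algebraMap_eval s q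
    change _ = _
    rw [h2, h3, hqe, ← h1, eval_linePoly]
    simp [add_comm]
  have hev := eval_linePoly p (fun i => (x i : ℂ)) (fun _ => 1) t
  have hcomm : (fun i => (x i : ℂ) + t * 1) = fun i => t + (x i : ℂ) := by
    funext i
    ring
  rw [hcomm, ← hmap] at hev
  rw [← hev]
  intro h
  obtain ⟨r, hr⟩ := (Polynomial.splits_iff_card_roots.mpr hq).mem_range_of_isRoot hq0 h
  apply ht
  rw [← hr]
  simp

/-- Symmetry makes the first partials at `(1,…,1)` equal, and Euler's identity gives their sum. -/
theorem eval_pderiv_one {n N : ℕ} (hn : 1 ≤ n) {p : MvPolynomial (Fin n) ℝ}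
    (hom : p.IsHomogeneous N) (hsym : p.IsSymmetric) (j : Fin n) :
    eval (fun _ => (1 : ℝ)) (pderiv j p) = ((N : ℝ) / n) * eval (fun _ => (1 : ℝ)) p := by
  have heq : ∀ i, eval (fun _ => (1 : ℝ)) (pderiv i p) = eval (fun _ => (1 : ℝ)) (pderiv j p) := by
    intro i
    have h := pderiv_rename (Equiv.swap i j).injective i p
    rw [hsym, Equiv.swap_apply_left] at h
    rw [h, eval_rename]
    rfl
  have h := congrArg (eval fun _ => (1 : ℝ)) hom.sum_X_mul_pderiv
  simp only [map_sum, map_mul, eval_X, one_mul, heq, Finset.sum_const, Finset.card_univ,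
    Fintype.card_fin, nsmul_eq_mul, map_natCast] at h
  have hn0 : (n : ℝ) ≠ 0 := by positivity
  field_simp
  linarith

/-- Theorem 4.1: every O(n)-invariant Gårding–Dirichlet polynomial `F` of degree `N`
on symmetric matrices is of the form `F(A) = p(λ₁(A),…,λₙ(A))` for a symmetric
homogeneous polynomial `p` of degree `N` with all coefficients `≥ 0`, with
`p(1,…,1) = F(I) > 0` and all first partials of `p` at `(1,…,1)` equal to
`(N/n)·F(I) > 0`. -/
theorem invariant_garding_dirichlet_structure
    (n N : ℕ) (hn : 1 ≤ n) (hN : 1 ≤ N)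
    (F : Matrix (Fin n) (Fin n) ℝ → ℝ)
    (hF : ∃ Φ : MvPolynomial (Fin n × Fin n) ℝ, Φ.IsHomogeneous N ∧
      ∀ A : Matrix (Fin n) (Fin n) ℝ, F A = MvPolynomial.eval (fun ij => A ij.1 ij.2) Φ)
    (hinv : ∀ g : Matrix (Fin n) (Fin n) ℝ, g * g.transpose = 1 →
      ∀ A : Matrix (Fin n) (Fin n) ℝ, A.IsSymm → F (g * A * g.transpose) = F A)
    (hhyp : ∀ A : Matrix (Fin n) (Fin n) ℝ, A.IsSymm →
      ∃ q : Polynomial ℝ, q.natDegree = N ∧ q.roots.card = N ∧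
        ∀ t : ℝ, q.eval t = F (t • (1 : Matrix (Fin n) (Fin n) ℝ) + A))
    (hpos : ∀ A : Matrix (Fin n) (Fin n) ℝ, A.PosDef → 0 < F A) :
    ∃ p : MvPolynomial (Fin n) ℝ,
      p.IsHomogeneous N ∧
      p.IsSymmetric ∧
      (∀ d, 0 ≤ p.coeff d) ∧
      eval (fun _ : Fin n => (1 : ℝ)) p = F 1 ∧
      0 < F 1 ∧
      (∀ j : Fin n, eval (fun _ : Fin n => (1 : ℝ)) (pderiv j p) = ((N : ℝ) / n) * F 1) ∧
      0 < ((N : ℝ) / n) * F 1 ∧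
      ∀ (A : Matrix (Fin n) (Fin n) ℝ) (hA : A.IsHermitian),
        F A = eval hA.eigenvalues p := by
  obtain ⟨Φ, hΦ, hFΦ⟩ := hF
  set p : MvPolynomial (Fin n) ℝ :=
    aeval (fun ij : Fin n × Fin n => if ij.1 = ij.2 then X ij.1 else 0) Φ with hp
  have hom : p.IsHomogeneous N := by
    rw [← one_mul N]
    refine hΦ.aeval _ fun ij => ?_
    split_ifs
    · exact isHomogeneous_X _ _
    · exact isHomogeneous_zero _ _ _
  have hpF : ∀ x : Fin n → ℝ, eval x p = F (Matrix.diagonal x) := by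
    intro x
    rw [hFΦ, hp, ← aeval_eq_eval, ← aeval_eq_eval, ← AlgHom.comp_apply, comp_aeval]
    congr 2
    funext ij
    simp only [Matrix.diagonal_apply]
    split_ifs <;> simp
  have hpos1 : 0 < F 1 := hpos 1 Matrix.PosDef.one
  have heval1 : eval (fun _ : Fin n => (1 : ℝ)) p = F 1 := by
    rw [hpF, Matrix.diagonal_one]
  have hsym : p.IsSymmetric := by
    intro e
    refine MvPolynomial.funext fun x => ?_
    -- conjugating `diagonal (x ∘ e)` by the permutation matrix of `e⁻¹` gives `diagonal x`
    rw [eval_rename, hpF, hpF, ← hinv (e⁻¹.permMatrix ℝ) ?_ _ (Matrix.isSymm_diagonal _)]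
    · congr 1
      rw [Matrix.transpose_permMatrix, Equiv.Perm.permMatrix, Equiv.Perm.permMatrix,
        PEquiv.toMatrix_toPEquiv_mul, PEquiv.mul_toMatrix_toPEquiv]
      ext i j
      simp [Matrix.diagonal_apply]
    · rw [Matrix.transpose_permMatrix, ← Matrix.permMatrix_mul]
      simp
  have hstab : PosStable N p := by
    refine posStable_of_hyperbolic hom (fun x t ht => ?_) fun x hx => ?_
    · obtain ⟨q, hqd, hqr, hqe⟩ := hhyp (Matrix.diagonal x) (Matrix.isSymm_diagonal x)
      refine aeval_ne_zero_of_roots x q ?_ (by rw [hqr, hqd]) (fun s => ?_) t ht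
      · rintro rfl
        simp at hqd
        omega
      · rw [hqe, hpF]
        congr 1
        rw [← Matrix.diagonal_one, ← Matrix.diagonal_smul, Matrix.diagonal_add]
        simp
    · rw [hpF]
      exact hpos _ (Matrix.PosDef.diagonal hx)
  refine ⟨p, hom, hsym, hstab.coeff_nonneg, heval1, hpos1, fun j => ?_, ?_, fun A hA => ?_⟩
  · rw [eval_pderiv_one hn hom hsym, heval1]
  · have : (0 : ℝ) < N := by exact_mod_cast hN
    have : (0 : ℝ) < n := by exact_mod_cast hn
    positivity
  · rw [hpF, ← hinv (hA.eigenvectorUnitary : Matrix (Fin n) (Fin n) ℝ) ?_ _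
      (Matrix.isSymm_diagonal _)]
    · congr 1
      exact hA.spectral_theorem
    · exact Unitary.coe_mul_star_self hA.eigenvectorUnitary
end

section
/- Let n ≥ 1 and let I₀, J₀ be real 4n×4n matrices with I₀ᵗ = −I₀, J₀ᵗ = −J₀, I₀² = J₀² = −Id, and I₀J₀ = −J₀I₀; set K₀ := I₀J₀ (a quaternionic structure on ℝ^{4n}). Then there exists a homogeneous real polynomial P of degree n in the (4n)² matrix entries such that for every real symmetric 4n×4n matrix A commuting with I₀, J₀ and K₀ one has: P(A)⁴ = det A; P(Id) = 1; and P(A) ≥ 0 whenever A is in addition positive semidefinite. (P(A) is the quaternionic determinant det_ℍ A = λ₁(A_ℍ)⋯λₙ(A_ℍ), the product of the n quaternionic eigenvalues of A, each real eigenvalue of A having multiplicity divisible by 4.) -/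
/-!
The generalized eigenspaces of a matrix `A` commuting with `I₀` and `J₀` are modules over the
quaternions, so every root of the characteristic polynomial of `A` has multiplicity divisible by `4`
(`four_dvd_rootMultiplicity`). If `A` is also symmetric, its eigenvalues are therefore `n` real
numbers `x₁, …, xₙ`, each taken four times (`exists_roots`), and `det A = (x₁ ⋯ xₙ) ^ 4`.

The product `x₁ ⋯ xₙ` is the elementary symmetric polynomial `eₙ(x)`. Newton's identities express it,
over a field of characteristic zero, as a polynomial in the power sums `p_j(x)`, and
`p_j(x) = tr (A ^ j) / 4` is a homogeneous polynomial of degree `j` in the entries of `A`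
(`exists_newton`). The resulting polynomial of degree `n` is `P`. At the identity all `xᵢ` are `1`,
and for a positive semidefinite `A` all `xᵢ` are nonnegative.
-/

open Matrix

/-- Two anticommuting square roots of `-1` on a real vector space make it a left module over the
division ring of quaternions, so its real dimension is `4` times its quaternionic dimension. In
infinite dimension the claim is trivial, as `finrank` is then `0`. -/
theorem four_dvd_finrank {V : Type*} [AddCommGroup V] [Module ℝ V]
    (f g : Module.End ℝ V) (hf : f * f = -1) (hg : g * g = -1) (hfg : f * g = -(g * f)) :
    4 ∣ Module.finrank ℝ V := by
  let b : QuaternionAlgebra.Basis (Module.End ℝ V) (-1 : ℝ) 0 (-1) :=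
    { i := f, j := g, k := f * g
      i_mul_i := by simp [hf]
      j_mul_j := by simp [hg]
      i_mul_j := rfl
      j_mul_i := by simp [hfg] }
  let φ : Quaternion ℝ →ₐ[ℝ] Module.End ℝ V := b.liftHom
  let _ : Module (Quaternion ℝ) V := Module.compHom V φ.toRingHom
  have _ : IsScalarTower ℝ (Quaternion ℝ) V := ⟨fun r q v => by
    change φ (r • q) v = r • φ q v
    simp⟩
  rw [← Module.finrank_mul_finrank ℝ (Quaternion ℝ) V, Quaternion.finrank_eq_four]
  exact dvd_mul_right _ _

/-- The algebraic multiplicity of `μ` is the dimension of the generalized eigenspace of `A`, which is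
invariant under everything commuting with `A`, in particular under `I₀` and `J₀`. -/
theorem four_dvd_rootMultiplicity {m : ℕ} (I₀ J₀ A : Matrix (Fin m) (Fin m) ℝ)
    (hI2 : I₀ * I₀ = -1) (hJ2 : J₀ * J₀ = -1) (hIJ : I₀ * J₀ = -(J₀ * I₀))
    (hAI : A * I₀ = I₀ * A) (hAJ : A * J₀ = J₀ * A) (μ : ℝ) :
    4 ∣ A.charpoly.rootMultiplicity μ := by
  have hI : Commute (toLin' A) (toLin' I₀) := by
    simp only [Commute, SemiconjBy, Module.End.mul_eq_comp, ← toLin'_mul, hAI]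
  have hJ : Commute (toLin' A) (toLin' J₀) := by
    simp only [Commute, SemiconjBy, Module.End.mul_eq_comp, ← toLin'_mul, hAJ]
  have mI := Module.End.mapsTo_maxGenEigenspace_of_comm hI μ
  have mJ := Module.End.mapsTo_maxGenEigenspace_of_comm hJ μ
  have h := four_dvd_finrank ((toLin' I₀).restrict mI) ((toLin' J₀).restrict mJ)
    (by
      ext1 v; apply Subtype.ext
      change toLin' I₀ (toLin' I₀ v) = -(v : Fin m → ℝ)
      simp [hI2, neg_mulVec])
    (by
      ext1 v; apply Subtype.ext
      change toLin' J₀ (toLin' J₀ v) = -(v : Fin m → ℝ)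
      simp [hJ2, neg_mulVec])
    (by
      ext1 v; apply Subtype.ext
      change toLin' I₀ (toLin' J₀ v) = -(toLin' J₀ (toLin' I₀ v))
      simp [hIJ, neg_mulVec])
  rwa [LinearMap.finrank_maxGenEigenspace_eq, charpoly_toLin'] at h

theorem trace_pow_eq {m : ℕ} {A : Matrix (Fin m) (Fin m) ℝ} (hA : A.IsHermitian) (k : ℕ) :
    (A ^ k).trace = ∑ i, hA.eigenvalues i ^ k := by
  conv_lhs =>
    rw [hA.spectral_theorem, ← map_pow, Unitary.conjStarAlgAut_apply, Matrix.trace_mul_cycle]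
  simp [Matrix.diagonal_pow, Matrix.trace_diagonal]

/-- The quaternionic eigenvalues: the `4n` real eigenvalues of `A` are `n` real numbers, each
repeated four times. -/
theorem exists_roots {n : ℕ} (I₀ J₀ A : Matrix (Fin (4 * n)) (Fin (4 * n)) ℝ)
    (hI2 : I₀ * I₀ = -1) (hJ2 : J₀ * J₀ = -1) (hIJ : I₀ * J₀ = -(J₀ * I₀))
    (hA : A.IsHermitian) (hAI : A * I₀ = I₀ * A) (hAJ : A * J₀ = J₀ * A) :
    ∃ x : Fin n → ℝ,
      Finset.univ.val.map hA.eigenvalues = 4 • Finset.univ.val.map x := by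
  have hd : ∀ μ ∈ Finset.univ.val.map hA.eigenvalues,
      4 ∣ (Finset.univ.val.map hA.eigenvalues).count μ := by
    intro μ _
    have h := four_dvd_rootMultiplicity I₀ J₀ A hI2 hJ2 hIJ hAI hAJ μ
    rw [← Polynomial.count_roots, hA.roots_charpoly_eq_eigenvalues] at h
    simpa using h
  obtain ⟨t, ht⟩ : ∃ t : Multiset ℝ, Finset.univ.val.map hA.eigenvalues = 4 • t := by
    exact Multiset.exists_smul_of_dvd_count _ hd
  have hc : t.card = n := by
    have := congrArg Multiset.card ht
    simp at this
    omega
  induction t using Quotient.inductionOn with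
  | h l =>
    obtain rfl : l.length = n := by simpa using hc
    refine ⟨l.get, ?_⟩
    rw [ht, Fin.univ_val_map, List.ofFn_get]
    rfl

open MvPolynomial in
/-- Newton's identities, read as a recursion: `e_k` of `n` numbers whose power sums are
`tr (A ^ j) / 4` is the value at `A` of a fixed homogeneous polynomial of degree `k` in the
entries. -/
theorem exists_newton (m k : ℕ) :
    ∃ Q : MvPolynomial (Fin m × Fin m) ℝ, Q.IsHomogeneous k ∧
      ∀ (A : Matrix (Fin m) (Fin m) ℝ) (n : ℕ) (x : Fin n → ℝ),
        (∀ j : ℕ, (A ^ j).trace = 4 * ∑ i, x i ^ j) →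
        eval (fun ij => A ij.1 ij.2) Q = eval x (esymm (Fin n) ℝ k) := by
  induction k using Nat.strong_induction_on with
  | _ k ih =>
  rcases Nat.eq_zero_or_pos k with rfl | hk
  · exact ⟨1, isHomogeneous_one _ _, fun A n x _ => by simp⟩
  choose! Q hQ hQe using ih
  -- the trace of the `j`-th power of the generic matrix
  let T : ℕ → MvPolynomial (Fin m × Fin m) ℝ := fun j =>
    ((Matrix.mvPolynomialX (Fin m) (Fin m) ℝ) ^ j).trace
  have hT : ∀ j, (T j).IsHomogeneous j := by
    have key : ∀ j a b, ((Matrix.mvPolynomialX (Fin m) (Fin m) ℝ ^ j) a b).IsHomogeneous j := by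
      intro j
      induction j with
      | zero =>
        intro a b
        rw [pow_zero, Matrix.one_apply]
        split_ifs
        · exact isHomogeneous_one _ _
        · exact isHomogeneous_zero _ _ _
      | succ j ihj =>
        intro a b
        rw [pow_succ, Matrix.mul_apply]
        exact IsHomogeneous.sum _ _ _ fun c _ => (ihj a c).mul (isHomogeneous_X _ _)
    exact fun j => IsHomogeneous.sum _ _ _ fun c _ => key j c c
  have hTe : ∀ (A : Matrix (Fin m) (Fin m) ℝ) j,
      eval (fun ij => A ij.1 ij.2) (T j) = (A ^ j).trace := by
    intro A j
    have h := Matrix.mvPolynomialX_mapMatrix_eval A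
    simp only [T]
    conv_rhs => rw [← h, ← map_pow]
    simp [Matrix.trace]
  refine ⟨C ((-1 : ℝ) ^ (k + 1) / (4 * (k : ℝ))) *
    ∑ a ∈ Finset.HasAntidiagonal.antidiagonal k with a.1 < k, C ((-1 : ℝ) ^ a.1) * (Q a.1 * T a.2), ?_, ?_⟩
  · refine IsHomogeneous.C_mul (IsHomogeneous.sum _ _ _ fun a ha => IsHomogeneous.C_mul ?_ _) _
    obtain ⟨h1, h2⟩ := Finset.mem_filter.1 ha
    rw [← Finset.HasAntidiagonal.mem_antidiagonal.1 h1]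
    exact (hQ _ h2).mul (hT _)
  · intro A n x hx
    have hN := congrArg (eval x) (mul_esymm_eq_sum (Fin n) ℝ k)
    simp only [map_mul, map_natCast, map_pow, map_neg, map_one, map_sum] at hN
    have hs : ∑ a ∈ Finset.HasAntidiagonal.antidiagonal k with a.1 < k,
        (-1) ^ a.1 * (eval (fun ij => A ij.1 ij.2) (Q a.1) * eval (fun ij => A ij.1 ij.2) (T a.2))
        = 4 * ∑ a ∈ Finset.HasAntidiagonal.antidiagonal k with a.1 < k,
        (-1) ^ a.1 * eval x (esymm (Fin n) ℝ a.1) * eval x (psum (Fin n) ℝ a.2) := by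
      rw [Finset.mul_sum]
      refine Finset.sum_congr rfl fun a ha => ?_
      rw [hQe _ (Finset.mem_filter.1 ha).2 A n x hx, hTe, hx]
      simp [psum]
      ring
    simp only [map_mul, map_sum, eval_C]
    rw [hs]
    have : (k : ℝ) ≠ 0 := by positivity
    field_simp
    linarith

/-- Lemma 4.4: for a quaternionic structure `I₀, J₀, K₀ = I₀J₀` on `ℝ^{4n}`, there is a
homogeneous polynomial `P` of degree `n` in the matrix entries (the quaternionic
determinant `det_ℍ`) so that for every real symmetric `4n × 4n` matrix `A` commuting
with `I₀, J₀, K₀` one has `P(A)⁴ = det A`, `P(Id) = 1`, and `P(A) ≥ 0` when `A` is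
positive semidefinite. -/
theorem quaternionic_determinant_polynomial
    (n : ℕ) (hn : 1 ≤ n)
    (I₀ J₀ : Matrix (Fin (4 * n)) (Fin (4 * n)) ℝ)
    (hIt : I₀.transpose = -I₀) (hJt : J₀.transpose = -J₀)
    (hI2 : I₀ * I₀ = -1) (hJ2 : J₀ * J₀ = -1)
    (hIJ : I₀ * J₀ = -(J₀ * I₀)) :
    ∃ P : MvPolynomial (Fin (4 * n) × Fin (4 * n)) ℝ,
      P.IsHomogeneous n ∧
      (∀ A : Matrix (Fin (4 * n)) (Fin (4 * n)) ℝ, A.IsSymm →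
        A * I₀ = I₀ * A → A * J₀ = J₀ * A → A * (I₀ * J₀) = (I₀ * J₀) * A →
        (MvPolynomial.eval (fun ij => A ij.1 ij.2) P) ^ 4 = A.det) ∧
      MvPolynomial.eval (fun ij => (1 : Matrix (Fin (4 * n)) (Fin (4 * n)) ℝ) ij.1 ij.2) P = 1 ∧
      (∀ A : Matrix (Fin (4 * n)) (Fin (4 * n)) ℝ, A.PosSemidef →
        A * I₀ = I₀ * A → A * J₀ = J₀ * A → A * (I₀ * J₀) = (I₀ * J₀) * A →
        0 ≤ MvPolynomial.eval (fun ij => A ij.1 ij.2) P) := by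
  obtain ⟨P, hP, hPe⟩ := exists_newton (4 * n) n
  have hE : ∀ x : Fin n → ℝ,
      MvPolynomial.eval x (MvPolynomial.esymm (Fin n) ℝ n) = ∏ i, x i := by
    intro x
    have : Finset.powersetCard n (Finset.univ : Finset (Fin n)) = {Finset.univ} := by
      simpa using Finset.powersetCard_self (Finset.univ : Finset (Fin n))
    simp [MvPolynomial.esymm, this]
  have key : ∀ (A : Matrix (Fin (4 * n)) (Fin (4 * n)) ℝ) (hA : A.IsHermitian) (x : Fin n → ℝ),
      Finset.univ.val.map hA.eigenvalues = 4 • Finset.univ.val.map x →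
      MvPolynomial.eval (fun ij => A ij.1 ij.2) P = ∏ i, x i := by
    intro A hA x hx
    rw [hPe A n x, hE]
    intro j
    have h := congrArg (fun s : Multiset ℝ => (s.map (· ^ j)).sum) hx
    simp only [Multiset.map_nsmul, Multiset.sum_nsmul, Multiset.map_map] at h
    rw [trace_pow_eq hA]
    simpa [Finset.sum] using h
  refine ⟨P, hP, ?_, ?_, ?_⟩
  · intro A hs hAI hAJ _
    have hA : A.IsHermitian := by
      rw [Matrix.IsHermitian, conjTranspose_eq_transpose_of_trivial]
      exact hs
    obtain ⟨x, hx⟩ := exists_roots I₀ J₀ A hI2 hJ2 hIJ hA hAI hAJ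
    rw [key A hA x hx, hA.det_eq_prod_eigenvalues]
    have h := congrArg Multiset.prod hx
    simp only [Multiset.prod_nsmul] at h
    simpa [Finset.prod] using h.symm
  · rw [hPe 1 n (fun _ => 1), hE]
    · simp
    · simp
  · intro A hA hAI hAJ _
    obtain ⟨x, hx⟩ := exists_roots I₀ J₀ A hI2 hJ2 hIJ hA.isHermitian hAI hAJ
    rw [key A hA.isHermitian x hx]
    refine Finset.prod_nonneg fun i _ => ?_
    have hm : x i ∈ Finset.univ.val.map hA.isHermitian.eigenvalues := by
      rw [hx, Multiset.mem_nsmul]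
      simp
    obtain ⟨j, _, hj⟩ := Multiset.mem_map.1 hm
    exact hj ▸ hA.eigenvalues_nonneg j
end

section
/- Let n ≥ 1 and let Γ ⊆ ℝⁿ be an open convex cone (that is, Γ is open, convex, and t·x ∈ Γ for every x ∈ Γ and t > 0) such that Γ ≠ ℝⁿ, the vector e = (1,…,1) belongs to Γ, and Γ is invariant under every permutation of the coordinates. Then Γ ⊆ {x ∈ ℝⁿ : x₁ + ⋯ + xₙ > 0}. -/
/-!
If `x ∈ Γ` had coordinate sum `s ≤ 0`, averaging its cyclic shifts would put `(s / n) • e` in the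
convex set `Γ`. As `e ∈ Γ` and `s / n ≤ 0`, the origin lies on the segment joining these two points,
hence in `Γ`. An open cone containing the origin is the whole space, contradicting `Γ ≠ ℝⁿ`.
-/

/-- Condition (a) of Section 6: an open convex cone `Γ ⊊ ℝⁿ` which contains
`e = (1,…,1)` and is invariant under all permutations of coordinates is contained
in the half-space `{x : x₁ + ⋯ + xₙ > 0}`. -/
theorem permutation_invariant_cone_subset_halfspace
    (n : ℕ) (hn : 1 ≤ n) (Γ : Set (Fin n → ℝ))
    (hopen : IsOpen Γ) (hconv : Convex ℝ Γ)
    (hcone : ∀ x ∈ Γ, ∀ t : ℝ, 0 < t → t • x ∈ Γ)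
    (hne : Γ ≠ Set.univ)
    (he : (fun _ : Fin n => (1 : ℝ)) ∈ Γ)
    (hperm : ∀ σ : Equiv.Perm (Fin n), ∀ x ∈ Γ, (x ∘ σ) ∈ Γ) :
    Γ ⊆ {x : Fin n → ℝ | 0 < ∑ i, x i} := by
  intro x hx
  rw [Set.mem_setOf_eq]
  by_contra! hs
  -- makes `Fin n` an additive group, so that `Equiv.addRight k` is a cyclic shift
  haveI : NeZero n := ⟨by omega⟩
  have hn0 : (0 : ℝ) < n := by exact_mod_cast hn
  obtain ⟨c, hc⟩ : ∃ c : ℝ, c = (n : ℝ)⁻¹ * ∑ i, x i := ⟨_, rfl⟩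
  have hc0 : c ≤ 0 := hc ▸ mul_nonpos_of_nonneg_of_nonpos (by positivity) hs
  have havg : (fun _ : Fin n => c) ∈ Γ := by
    have h := hconv.sum_mem (t := Finset.univ) (w := fun _ : Fin n => (n : ℝ)⁻¹)
      (z := fun k => x ∘ Equiv.addRight k) (fun _ _ => by positivity)
      (by simp [hn0.ne']) (fun k _ => hperm _ x hx)
    convert h using 1
    funext i
    have hshift : ∑ k, x (i + k) = ∑ k, x k := Equiv.sum_comp (Equiv.addLeft i) x
    simp [Finset.sum_apply, ← Finset.mul_sum, hshift, hc]
  have hpos : 0 < 1 - c := by linarith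
  have hzero : (0 : Fin n → ℝ) ∈ Γ := by
    -- `0 = (-c / (1 - c)) • e + (1 / (1 - c)) • (c • e)`
    have h := hconv he havg (a := -c / (1 - c)) (b := 1 / (1 - c))
      (div_nonneg (by linarith) hpos.le) (by positivity) (by field_simp; ring)
    convert h using 1
    funext i
    simp only [Pi.zero_apply, Pi.add_apply, Pi.smul_apply, smul_eq_mul]
    field_simp
    ring
  refine hne (Set.eq_univ_of_forall fun y => ?_)
  have hcont : Filter.Tendsto (fun t : ℝ => t • y) (nhdsWithin 0 (Set.Ioi 0)) (nhds 0) := by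
    have : Continuous (fun t : ℝ => t • y) := by fun_prop
    simpa using (this.tendsto 0).mono_left nhdsWithin_le_nhds
  obtain ⟨t, hty, ht⟩ :=
    ((hcont.eventually (hopen.mem_nhds hzero)).and self_mem_nhdsWithin).exists
  have ht' : 0 < t := ht
  have h := hcone _ hty t⁻¹ (inv_pos.mpr ht')
  rwa [smul_smul, inv_mul_cancel₀ ht'.ne', one_smul] at h
end

section
/- Let n ≥ 1 be an integer, t ∈ ℝ, and λ₁,…,λₙ ∈ ℝ with t + λ_j > 0 and t − λ_j > 0 for every j = 1,…,n. Then (∏_{ε ∈ {−1,+1}ⁿ} (n·t + ε₁λ₁ + ε₂λ₂ + ⋯ + εₙλₙ))^{1/2ⁿ} ≥ (∏_{j=1}^{n} (t + λ_j)(t − λ_j))^{1/(2n)}, where the first product runs over all 2ⁿ choices of signs ε = (ε₁,…,εₙ) ∈ {−1,+1}ⁿ. -/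
/-!
Write `D = ∏ⱼ (t+λⱼ)(t−λⱼ)` and let `F ε = ∑ⱼ (t + εⱼλⱼ)` be the factor belonging to the sign
vector `ε`. By AM–GM, `F ε ≥ (∏ⱼ (t + εⱼλⱼ))^{1/n}`. Multiplying this with the same bound for
the opposite sign vector `-ε` gives `F ε * F (-ε) ≥ D^{1/n}`. Since `ε ↦ -ε` permutes the sign
vectors, the product over all `2ⁿ` of them yields `(∏_ε F ε)² ≥ D^{2ⁿ/n}`, which is the claim
after taking the `2ⁿ⁺¹`-th root.
-/

/-- AM–GM, with the factor `n` on the geometric side discarded. -/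
lemma prod_rpow_inv_le_sum {n : ℕ} (hn : 1 ≤ n) (a : Fin n → ℝ) (ha : ∀ j, 0 < a j) :
    (∏ j, a j) ^ ((1 : ℝ) / n) ≤ ∑ j, a j := by
  have hn' : (1 : ℝ) ≤ n := by exact_mod_cast hn
  have h := Real.geom_mean_le_arith_mean_weighted Finset.univ (fun _ : Fin n => (1 : ℝ) / n) a
    (fun _ _ => by positivity) (by simp; field_simp) (fun j _ => (ha j).le)
  rw [Real.finsetProd_rpow _ _ (fun j _ => (ha j).le), ← Finset.mul_sum] at h
  refine h.trans (mul_le_of_le_one_left (Finset.sum_nonneg fun j _ => (ha j).le) ?_)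
  rw [div_le_one (by linarith)]
  exact hn'

/-- Proposition 8.1: determinant majorization for the Lagrangian Monge–Ampère
operator. If `t ± λⱼ > 0` for all `j`, then
`(∏_{ε ∈ {±1}ⁿ} (nt + ε₁λ₁ + ⋯ + εₙλₙ))^{1/2ⁿ} ≥ (∏ⱼ (t+λⱼ)(t−λⱼ))^{1/(2n)}`. -/
theorem lagrangian_monge_ampere_determinant_majorization
    (n : ℕ) (hn : 1 ≤ n) (t : ℝ) (l : Fin n → ℝ)
    (hpos : ∀ j, 0 < t + l j) (hneg : ∀ j, 0 < t - l j) :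
    (∏ j, (t + l j) * (t - l j)) ^ ((1 : ℝ) / (2 * n)) ≤
      (∏ ε : Fin n → Bool,
        ((n : ℝ) * t + ∑ j, (if ε j then (1 : ℝ) else -1) * l j)) ^ ((1 : ℝ) / 2 ^ n) := by
  set D : ℝ := ∏ j, (t + l j) * (t - l j) with hD
  have hD0 : 0 < D := Finset.prod_pos fun j _ => mul_pos (hpos j) (hneg j)
  have hn' : (0 : ℝ) < n := by exact_mod_cast hn
  let a : (Fin n → Bool) → Fin n → ℝ := fun ε j => t + (if ε j then (1 : ℝ) else -1) * l j
  have ha : ∀ ε j, 0 < a ε j := by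
    intro ε j
    have h1 := hpos j
    have h2 := hneg j
    dsimp only [a]
    split_ifs <;> linarith
  have hF : ∀ ε : Fin n → Bool,
      (n : ℝ) * t + ∑ j, (if ε j then (1 : ℝ) else -1) * l j = ∑ j, a ε j := by
    intro ε
    simp [a, Finset.sum_add_distrib]
  simp_rw [hF]
  set P : ℝ := ∏ ε, ∑ j, a ε j with hP
  have hP0 : 0 ≤ P := Finset.prod_nonneg fun ε _ => Finset.sum_nonneg fun j _ => (ha ε j).le
  let e : (Fin n → Bool) ≃ (Fin n → Bool) := Equiv.arrowCongr (Equiv.refl _) Equiv.boolNot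
  have hpair : ∀ ε, D ^ ((1 : ℝ) / n) ≤ (∑ j, a ε j) * ∑ j, a (e ε) j := by
    intro ε
    have hprod : D = (∏ j, a ε j) * ∏ j, a (e ε) j := by
      rw [hD, ← Finset.prod_mul_distrib]
      refine Finset.prod_congr rfl fun j _ => ?_
      cases h : ε j <;> simp [a, e, h, sub_eq_add_neg, mul_comm]
    have p1 := Finset.prod_pos fun j (_ : j ∈ Finset.univ) => ha ε j
    have p2 := Finset.prod_pos fun j (_ : j ∈ Finset.univ) => ha (e ε) j
    rw [hprod, Real.mul_rpow p1.le p2.le]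
    exact mul_le_mul (prod_rpow_inv_le_sum hn _ (ha ε)) (prod_rpow_inv_le_sum hn _ (ha (e ε)))
      (Real.rpow_nonneg p2.le _) (Finset.sum_nonneg fun j _ => (ha ε j).le)
  have hsq : (D ^ ((1 : ℝ) / n)) ^ (2 ^ n) ≤ P ^ 2 := by
    have h := Finset.prod_le_prod (s := Finset.univ)
      (fun (ε : Fin n → Bool) _ => Real.rpow_nonneg hD0.le ((1 : ℝ) / n)) (fun ε _ => hpair ε)
    rw [Finset.prod_mul_distrib, Equiv.prod_comp e (fun ε => ∑ j, a ε j), ← hP, ← sq] at h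
    simpa using h
  have hroot := Real.rpow_le_rpow (by positivity) hsq
    (show (0 : ℝ) ≤ 1 / (2 * 2 ^ n) by positivity)
  rw [← Real.rpow_natCast _ (2 ^ n), ← Real.rpow_natCast P 2,
    ← Real.rpow_mul hD0.le, ← Real.rpow_mul hD0.le,
    ← Real.rpow_mul hP0] at hroot
  convert hroot using 2
  · push_cast
    field_simp
  · push_cast
    field_simp
end

section
/- Let N ≥ 3 and n ≥ 1 be integers, and define the diagonal operator F on (n+1)×(n+1) real matrices A = (a_{ij}), with rows and columns indexed by 0,1,…,n, by F(A) := a₀₀^{N−1} · (1/n)(a₁₁ + a₂₂ + ⋯ + a_{nn}). Then determinant majorization fails for F: for every γ > 0 there exists a real symmetric positive definite (n+1)×(n+1) matrix A (which may be taken diagonal) such that F(A)^{1/N} < γ · (det A)^{1/(n+1)}. -/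
/-!
On `A = diag(a, 1, …, 1)` with `a > 0` one has `F(A)^{1/N} = a^{(N-1)/N}` and
`(det A)^{1/(n+1)} = a^{1/(n+1)}`. Since `N ≥ 3` and `n ≥ 1`, the exponent
`e = (N-1)/N - 1/(n+1)` is at least `2/3 - 1/2 > 0`, so the quotient `a^e` of the two sides
tends to `0` as `a → 0⁺`; the choice `a = (γ/2)^{1/e}` makes it equal to `γ/2 < γ`.
-/

/-- Section 9: determinant majorization fails for the diagonal Gårding–Dirichlet
operator `F(A) = a₀₀^{N-1} · (1/n)(a₁₁ + ⋯ + aₙₙ)` on `(n+1)×(n+1)` symmetric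
matrices: for every `γ > 0` there is a positive definite matrix `A` with
`F(A)^{1/N} < γ · (det A)^{1/(n+1)}`. -/
theorem determinant_majorization_fails_without_CRH
    (N n : ℕ) (hN : 3 ≤ N) (hn : 1 ≤ n) :
    ∀ γ : ℝ, 0 < γ →
      ∃ A : Matrix (Fin (n + 1)) (Fin (n + 1)) ℝ, A.PosDef ∧
        ((A 0 0) ^ (N - 1) * ((1 : ℝ) / n * ∑ i : Fin n, A i.succ i.succ)) ^ ((1 : ℝ) / N) <
          γ * A.det ^ ((1 : ℝ) / (n + 1)) := by
  intro γ hγ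
  have hN' : (3 : ℝ) ≤ N := by exact_mod_cast hN
  have hn' : (1 : ℝ) ≤ n := by exact_mod_cast hn
  have h1 : (1 : ℝ) / N ≤ 1 / 3 := one_div_le_one_div_of_le (by norm_num) hN'
  have h2 : (1 : ℝ) / (n + 1) ≤ 1 / 2 :=
    one_div_le_one_div_of_le (by norm_num) (by linarith)
  obtain ⟨e, he⟩ : ∃ e : ℝ, e = (1 - 1 / N) - 1 / (n + 1) := ⟨_, rfl⟩
  have he0 : 0 < e := by linarith
  obtain ⟨a, ha⟩ : ∃ a : ℝ, a = (γ / 2) ^ (1 / e) := ⟨_, rfl⟩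
  have ha0 : 0 < a := by rw [ha]; positivity
  have hae : a ^ e = γ / 2 := by
    rw [ha, ← Real.rpow_mul (by positivity), one_div_mul_cancel he0.ne', Real.rpow_one]
  refine ⟨Matrix.diagonal (Fin.cons a fun _ => 1), ?_, ?_⟩
  · refine Matrix.PosDef.diagonal fun i => ?_
    refine Fin.cases ?_ (fun j => ?_) i
    · simpa using ha0
    · simp
  · have hn0 : (n : ℝ) ≠ 0 := by linarith
    have hdet : (Matrix.diagonal (Fin.cons a fun _ => 1 :
        Fin (n + 1) → ℝ)).det = a := by
      simp [Matrix.det_diagonal, Fin.prod_univ_succ]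
    rw [hdet]
    have hF : (1 : ℝ) / n * ∑ i : Fin n, (Matrix.diagonal (Fin.cons a fun _ => 1 :
        Fin (n + 1) → ℝ)) i.succ i.succ = 1 := by
      simp [hn0]
    rw [hF, mul_one, Matrix.diagonal_apply_eq, Fin.cons_zero, ← Real.rpow_natCast,
      ← Real.rpow_mul ha0.le, Nat.cast_sub (by omega : 1 ≤ N), Nat.cast_one]
    have hexp : ((N : ℝ) - 1) * (1 / N) = e + 1 / (n + 1) := by
      rw [he, sub_mul, mul_one_div_cancel (by linarith : (N : ℝ) ≠ 0)]
      ring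
    rw [hexp, Real.rpow_add ha0, hae]
    exact mul_lt_mul_of_pos_right (by linarith) (by positivity)
end

section
/- Let V be a finite-dimensional real inner product space and Γ ⊆ V a nonempty open convex cone which is regular, meaning cl(Γ) ∩ (−cl(Γ)) = {0}. Let N ≥ 1 and let g : V → ℝ be continuous with g(t·x) = t^N·g(x) for all t > 0 and x ∈ V, g(x) > 0 for all x ∈ Γ, and g(x) = 0 for all x ∈ ∂Γ. Let y belong to the (topological) interior of the polar cone Γ⁰ := {y ∈ V : ⟨y, x⟩ ≥ 0 for all x ∈ Γ}. Then for every c ∈ ℝ the sublevel set K_c := {x ∈ Γ : ⟨y, x⟩ − log g(x) ≤ c} is compact. -/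
/-!
Pairing with an interior point `y` of the polar cone is coercive on `Γ`: `⟪y, x⟫ ≥ ε ‖x‖`.
By homogeneity and compactness of the unit sphere `g x ≤ M ‖x‖ ^ N`, so on `K_c` one has
`ε ‖x‖ ≤ c + log M + N log ‖x‖`; as the logarithm grows slower than any linear function,
`K_c` is bounded. Since `g` vanishes on `∂Γ`, the inequality `exp (⟪y, x⟫ - c) ≤ g x` on
`closure Γ` already forces `x ∈ Γ`, so `K_c` is closed. Compactness follows as `V` is proper.
-/

open scoped RealInnerProductSpace

/-- Elements of the interior of the polar cone are coercive on the cone. -/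
lemma exists_coercive_of_mem_interior_polar {V : Type*} [NormedAddCommGroup V]
    [InnerProductSpace ℝ V] {Γ : Set V} {y : V}
    (hy : y ∈ interior {z : V | ∀ x ∈ Γ, 0 ≤ ⟪z, x⟫}) :
    ∃ ε : ℝ, 0 < ε ∧ ∀ x ∈ Γ, ε * ‖x‖ ≤ ⟪y, x⟫ := by
  obtain ⟨ε, hε, hball⟩ := Metric.nhds_basis_closedBall.mem_iff.1 (mem_interior_iff_mem_nhds.1 hy)
  refine ⟨ε, hε, fun x hx => ?_⟩
  rcases eq_or_ne x 0 with rfl | hx0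
  · simp
  have hn : 0 < ‖x‖ := norm_pos_iff.2 hx0
  -- The polar cone still contains `y` moved by `ε` in the direction opposite to `x`.
  have hmem : y - (ε / ‖x‖) • x ∈ Metric.closedBall y ε := by
    rw [mem_closedBall_iff_norm, sub_sub_cancel_left, norm_neg, norm_smul, norm_div, norm_norm,
      div_mul_cancel₀ _ hn.ne', Real.norm_of_nonneg hε.le]
  have h := hball hmem x hx
  rw [inner_sub_left, real_inner_smul_left, real_inner_self_eq_norm_sq] at h
  have h2 : ε / ‖x‖ * ‖x‖ ^ 2 = ε * ‖x‖ := by field_simp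
  linarith

/-- A continuous positively homogeneous function is bounded by a multiple of the corresponding
power of the norm; the multiple is an upper bound on the unit sphere, made positive so that
its logarithm is meaningful. -/
lemma exists_le_mul_norm_pow {V : Type*} [NormedAddCommGroup V] [NormedSpace ℝ V]
    [FiniteDimensional ℝ V] {N : ℕ} {g : V → ℝ} (hgcont : Continuous g)
    (hghom : ∀ t : ℝ, 0 < t → ∀ x : V, g (t • x) = t ^ N * g x) :
    ∃ M : ℝ, 0 < M ∧ ∀ x : V, x ≠ 0 → g x ≤ M * ‖x‖ ^ N := by
  have := FiniteDimensional.proper ℝ V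
  obtain ⟨M, hM⟩ := (isCompact_sphere (0 : V) 1).bddAbove_image hgcont.continuousOn
  refine ⟨max M 1, by positivity, fun x hx0 => ?_⟩
  have hn : 0 < ‖x‖ := norm_pos_iff.2 hx0
  have hs : ‖x‖⁻¹ • x ∈ Metric.sphere (0 : V) 1 := by
    simp [norm_smul, hn.ne']
  have h1 : g (‖x‖⁻¹ • x) ≤ max M 1 := (hM ⟨_, hs, rfl⟩).trans (le_max_left _ _)
  have h2 := hghom ‖x‖ hn (‖x‖⁻¹ • x)
  rw [smul_inv_smul₀ hn.ne'] at h2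
  rw [h2, mul_comm]
  gcongr

/-- The Exhaustion Theorem C.2 (regular case): for a regular nonempty open convex
cone `Γ`, a continuous `g` positively homogeneous of degree `N`, positive on `Γ` and
vanishing on `∂Γ`, and `y` in the interior of the polar cone `Γ⁰`, all sublevel sets
`K_c = {x ∈ Γ : ⟨y,x⟩ − log g(x) ≤ c}` are compact. -/
theorem exhaustion_theorem
    (V : Type*) [NormedAddCommGroup V] [InnerProductSpace ℝ V] [FiniteDimensional ℝ V]
    (Γ : Set V) (hne : Γ.Nonempty) (hopen : IsOpen Γ) (hconv : Convex ℝ Γ)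
    (hcone : ∀ x ∈ Γ, ∀ t : ℝ, 0 < t → t • x ∈ Γ)
    (hreg : closure Γ ∩ (-closure Γ) = {0})
    (N : ℕ) (hN : 1 ≤ N)
    (g : V → ℝ) (hgcont : Continuous g)
    (hghom : ∀ t : ℝ, 0 < t → ∀ x : V, g (t • x) = t ^ N * g x)
    (hgpos : ∀ x ∈ Γ, 0 < g x)
    (hgbd : ∀ x ∈ frontier Γ, g x = 0)
    (y : V) (hy : y ∈ interior {z : V | ∀ x ∈ Γ, 0 ≤ ⟪z, x⟫}) :
    ∀ c : ℝ, IsCompact {x ∈ Γ | ⟪y, x⟫ - Real.log (g x) ≤ c} := by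
  intro c
  have := FiniteDimensional.proper ℝ V
  obtain ⟨ε, hε, hcoer⟩ := exists_coercive_of_mem_interior_polar hy
  obtain ⟨M, hM, hgM⟩ := exists_le_mul_norm_pow hgcont hghom
  have hN0 : (0 : ℝ) < N := by exact_mod_cast hN
  -- Homogeneity forces `g 0 = 0`, so the cone does not contain the origin.
  have hg0 : g 0 = 0 := by
    have h := hghom 2 two_pos 0
    rw [smul_zero] at h
    have h2 : (1 : ℝ) < 2 ^ N := one_lt_pow₀ one_lt_two (by omega)
    exact (mul_eq_zero.1 (show ((2 : ℝ) ^ N - 1) * g 0 = 0 by linarith)).resolve_left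
      (by linarith)
  have hset : {x ∈ Γ | ⟪y, x⟫ - Real.log (g x) ≤ c}
      = closure Γ ∩ {x | Real.exp (⟪y, x⟫ - c) ≤ g x} := by
    ext x
    simp only [Set.mem_ofPred_eq, Set.mem_inter_iff]
    constructor
    · rintro ⟨hx, hle⟩
      exact ⟨subset_closure hx, (Real.le_log_iff_exp_le (hgpos x hx)).1 (by linarith)⟩
    · rintro ⟨hx, hle⟩
      have hxΓ : x ∈ Γ := by
        by_contra hnot
        have h0 := hgbd x (by rw [hopen.frontier_eq]; exact ⟨hx, hnot⟩)
        linarith [Real.exp_pos (⟪y, x⟫ - c)]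
      have := (Real.le_log_iff_exp_le (hgpos x hxΓ)).2 hle
      exact ⟨hxΓ, by linarith⟩
  refine Metric.isCompact_of_isClosed_isBounded ?_ ?_
  · rw [hset]
    exact isClosed_closure.inter (isClosed_le (by fun_prop) hgcont)
  · -- With `δ = ε / (2 N)`, the bound `log (δ r) ≤ δ r - 1` absorbs `N log r` into `ε r / 2`.
    set δ : ℝ := ε / (2 * N) with hδ
    have hδ0 : 0 < δ := by positivity
    have hNδ : N * δ = ε / 2 := by rw [hδ]; field_simp
    refine isBounded_iff_forall_norm_le.2 ⟨(c + Real.log M - N * Real.log δ) / (ε / 2), ?_⟩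
    rintro x ⟨hx, hle⟩
    have hx0 : x ≠ 0 := by
      rintro rfl
      exact (hgpos 0 hx).ne' hg0
    have hn : 0 < ‖x‖ := norm_pos_iff.2 hx0
    have h1 : Real.log (g x) ≤ Real.log M + N * Real.log ‖x‖ := by
      rw [← Real.log_pow, ← Real.log_mul hM.ne' (by positivity)]
      exact Real.log_le_log (hgpos x hx) (hgM x hx0)
    have h2 : Real.log δ + Real.log ‖x‖ ≤ δ * ‖x‖ - 1 := by
      rw [← Real.log_mul hδ0.ne' hn.ne']
      exact Real.log_le_sub_one_of_pos (by positivity)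
    have h3 := mul_le_mul_of_nonneg_left h2 hN0.le
    have h4 : N * (δ * ‖x‖) = ε / 2 * ‖x‖ := by rw [← mul_assoc, hNδ]
    rw [le_div_iff₀ (by positivity)]
    linarith [hcoer x hx]
end

section
/- Let N ≥ 1 be an integer, λ₁,…,λ_N ∈ ℝ, and c > 0, and define φ(t) := log(c · ∏_{j=1}^{N} (1 + t·λ_j)) for real t in a neighborhood of 0 on which all factors 1 + t·λ_j are positive. Then for every even integer ℓ ≥ 2 and every integer k ≥ ℓ one has (|φ^{(k)}(0)| / (k−1)!)^{1/k} ≤ (|φ^{(ℓ)}(0)| / (ℓ−1)!)^{1/ℓ}; equivalently, |∑_{j=1}^{N} λ_j^k|^{1/k} ≤ (∑_{j=1}^{N} λ_j^ℓ)^{1/ℓ}. -/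
/-!
On the open set where all factors `1 + t * l j` are positive, `log (c * ∏ j, (1 + t * l j))` is
`log c + ∑ j, log (1 + t * l j)`, so differentiating term by term gives
`φ⁽ⁿ⁺¹⁾(t) = (-1)ⁿ n! ∑ j, (l j / (1 + t * l j))ⁿ⁺¹` (`iteratedDeriv_log_prod`). At `t = 0` this
reduces the derivative estimate to the one on power sums. The latter is the monotonicity of
`ℓᵖ` norms: with `M = (∑ j, l j ^ L) ^ (1 / L)` every `|l j| ≤ M`, because `L` is even, hence
`|∑ j, l j ^ k| ≤ ∑ j, |l j| ^ L * M ^ (k - L) = M ^ k` (`powerSum_estimate`).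
-/

/-- Monotonicity of `ℓᵖ` norms, with an absolute value outside the sum of order `k`. -/
lemma powerSum_estimate {N : ℕ} (l : Fin N → ℝ) {L k : ℕ} (hLeven : Even L) (hL2 : 2 ≤ L)
    (hLk : L ≤ k) :
    |∑ j, l j ^ k| ^ ((1 : ℝ) / k) ≤ (∑ j, l j ^ L) ^ ((1 : ℝ) / L) := by
  have hL0 : L ≠ 0 := by omega
  have hk0 : k ≠ 0 := by omega
  have hS : 0 ≤ ∑ j, l j ^ L := Finset.sum_nonneg fun j _ => hLeven.pow_nonneg _
  set M : ℝ := (∑ j, l j ^ L) ^ ((1 : ℝ) / L) with hM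
  have hM0 : 0 ≤ M := Real.rpow_nonneg hS _
  have hML : M ^ L = ∑ j, l j ^ L := by
    rw [hM, one_div, Real.rpow_inv_natCast_pow hS hL0]
  have hle : ∀ j, |l j| ≤ M := fun j => by
    refine le_of_pow_le_pow_left₀ hL0 hM0 ?_
    rw [hML, hLeven.pow_abs]
    exact Finset.single_le_sum (f := fun j => l j ^ L) (fun i _ => hLeven.pow_nonneg _)
      (Finset.mem_univ j)
  have hsum : |∑ j, l j ^ k| ≤ M ^ k := by
    calc |∑ j, l j ^ k| ≤ ∑ j, |l j ^ k| := Finset.abs_sum_le_sum_abs _ _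
      _ ≤ ∑ j, l j ^ L * M ^ (k - L) := by
        refine Finset.sum_le_sum fun j _ => ?_
        rw [abs_pow, ← hLeven.pow_abs (l j), ← Nat.add_sub_cancel' hLk, pow_add,
          Nat.add_sub_cancel_left]
        exact mul_le_mul_of_nonneg_left (pow_le_pow_left₀ (abs_nonneg _) (hle j) _)
          (pow_nonneg (abs_nonneg _) _)
      _ = M ^ k := by
        rw [← Finset.sum_mul, ← hML, ← pow_add, Nat.add_sub_cancel' hLk]
  calc |∑ j, l j ^ k| ^ ((1 : ℝ) / k) ≤ (M ^ k) ^ ((1 : ℝ) / k) :=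
        Real.rpow_le_rpow (abs_nonneg _) hsum (by positivity)
    _ = M := by rw [one_div, Real.pow_rpow_inv_natCast hM0 hk0]

lemma iteratedDeriv_log_prod {N : ℕ} (l : Fin N → ℝ) {c : ℝ} (hc : 0 < c) (n : ℕ) :
    ∀ t : ℝ, (∀ j, 0 < 1 + t * l j) →
      iteratedDeriv (n + 1) (fun t : ℝ => Real.log (c * ∏ j, (1 + t * l j))) t =
        (-1) ^ n * (n.factorial : ℝ) * ∑ j, l j ^ (n + 1) * ((1 + t * l j) ^ (n + 1))⁻¹ := by
  have hev : ∀ t : ℝ, (∀ j, 0 < 1 + t * l j) → ∀ᶠ s in nhds t, ∀ j, 0 < 1 + s * l j := by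
    intro t ht
    refine Filter.eventually_all.2 fun j => ?_
    have hcont : Continuous fun s : ℝ => 1 + s * l j := by fun_prop
    exact hcont.continuousAt.eventually (lt_mem_nhds (ht j))
  have hlin : ∀ (t : ℝ) (j : Fin N), HasDerivAt (fun s : ℝ => 1 + s * l j) (l j) t := by
    intro t j
    simpa using ((hasDerivAt_id t).mul_const (l j)).const_add 1
  induction n with
  | zero =>
    intro t ht
    have heq : (fun t : ℝ => Real.log (c * ∏ j, (1 + t * l j))) =ᶠ[nhds t]
        fun t => Real.log c + ∑ j, Real.log (1 + t * l j) := by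
      filter_upwards [hev t ht] with s hs
      rw [Real.log_mul hc.ne' (Finset.prod_ne_zero_iff.2 fun j _ => (hs j).ne'),
        Real.log_prod fun j _ => (hs j).ne']
    have hd : HasDerivAt (fun t => Real.log c + ∑ j, Real.log (1 + t * l j))
        (∑ j, l j / (1 + t * l j)) t :=
      (HasDerivAt.fun_sum fun j _ => (hlin t j).log (ht j).ne').const_add _
    rw [zero_add, iteratedDeriv_one, heq.deriv_eq, hd.deriv]
    simp [div_eq_mul_inv]
  | succ n ih =>
    intro t ht
    rw [iteratedDeriv_succ]
    have heq : iteratedDeriv (n + 1) (fun t : ℝ => Real.log (c * ∏ j, (1 + t * l j)))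
        =ᶠ[nhds t] fun t => (-1) ^ n * (n.factorial : ℝ) *
          ∑ j, l j ^ (n + 1) * ((1 + t * l j) ^ (n + 1))⁻¹ := by
      filter_upwards [hev t ht] with s hs using ih s hs
    have hd := (HasDerivAt.fun_sum (u := Finset.univ) fun j _ =>
      (((hlin t j).fun_pow (n + 1)).fun_inv (pow_ne_zero _ (ht j).ne')).const_mul
        (l j ^ (n + 1))).const_mul ((-1) ^ n * (n.factorial : ℝ))
    rw [heq.deriv_eq, hd.deriv, Finset.mul_sum, Finset.mul_sum]
    refine Finset.sum_congr rfl fun j _ => ?_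
    have h0 := (ht j).ne'
    rw [Nat.factorial_succ, Nat.add_sub_cancel]
    push_cast
    field_simp
    ring

lemma abs_iteratedDeriv_log_prod {N : ℕ} (l : Fin N → ℝ) {c : ℝ} (hc : 0 < c) {k : ℕ}
    (hk : k ≠ 0) :
    |iteratedDeriv k (fun t : ℝ => Real.log (c * ∏ j, (1 + t * l j))) 0| /
      (Nat.factorial (k - 1) : ℝ) = |∑ j, l j ^ k| := by
  obtain ⟨n, rfl⟩ := Nat.exists_eq_succ_of_ne_zero hk
  have hf : (n.factorial : ℝ) ≠ 0 := by exact_mod_cast n.factorial_ne_zero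
  rw [Nat.succ_eq_add_one, iteratedDeriv_log_prod l hc n 0 (by simp), Nat.add_sub_cancel]
  simp [abs_mul, hf]


/-- Theorem D.2 (Güler's estimate): for `φ(t) = log(c·∏ⱼ(1 + t·λⱼ))` with `c > 0`,
every even `ℓ ≥ 2` and every `k ≥ ℓ`,
`(|φ⁽ᵏ⁾(0)|/(k−1)!)^{1/k} ≤ (|φ⁽ˡ⁾(0)|/(ℓ−1)!)^{1/ℓ}`; equivalently
`|∑ⱼ λⱼᵏ|^{1/k} ≤ (∑ⱼ λⱼˡ)^{1/ℓ}`. -/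
theorem guler_derivative_estimate
    (N : ℕ) (hN : 1 ≤ N) (l : Fin N → ℝ) (c : ℝ) (hc : 0 < c)
    (L k : ℕ) (hLeven : Even L) (hL2 : 2 ≤ L) (hLk : L ≤ k) :
    (|iteratedDeriv k (fun t : ℝ => Real.log (c * ∏ j, (1 + t * l j))) 0| /
        (Nat.factorial (k - 1) : ℝ)) ^ ((1 : ℝ) / k) ≤
      (|iteratedDeriv L (fun t : ℝ => Real.log (c * ∏ j, (1 + t * l j))) 0| /
        (Nat.factorial (L - 1) : ℝ)) ^ ((1 : ℝ) / L) ∧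
    |∑ j, l j ^ k| ^ ((1 : ℝ) / k) ≤ (∑ j, l j ^ L) ^ ((1 : ℝ) / L) := by
  have hmain := powerSum_estimate l hLeven hL2 hLk
  refine ⟨?_, hmain⟩
  rw [abs_iteratedDeriv_log_prod l hc (by omega), abs_iteratedDeriv_log_prod l hc (by omega),
    abs_of_nonneg (Finset.sum_nonneg fun j _ => hLeven.pow_nonneg (l j))]
  exact hmain
end
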